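/- arXiv:0710.3991 — 9 statements merged into one kernel-verified Lean document; each statement's English description precedes it below -/
import Mathlib

section
/- Let X ⊂ ℝⁿ be open and u : X → [−∞, ∞) upper semicontinuous. (i) If u is locally subaffine on X (every point of X has an open neighborhood B ⊂ X such that the restriction of u to B is subaffine on B), then u is subaffine on X. (ii) Moreover, u fails to be locally subaffine on X if and only if there exist a point x₀ ∈ X, an affine function a on ℝⁿ, and ε > 0 such that u(x) − a(x) ≤ −ε|x − x₀|² for all x in some neighborhood of x₀ and u(x₀) − a(x₀) = 0. -/
open Set Metric Filter MeasureTheory Asymptotics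
open scoped Topology BigOperators RealInnerProductSpace

noncomputable section

abbrev Euc (n : ℕ) : Type := EuclideanSpace ℝ (Fin n)

abbrev SymMat (n : ℕ) : Type := ↥(selfAdjoint (Matrix (Fin n) (Fin n) ℝ))

/-- `u` is subaffine on `X`. -/
def SubaffineOn {n : ℕ} (X : Set (Euc n)) (u : Euc n → EReal) : Prop :=
  ∀ K : Set (Euc n), IsCompact K → K ⊆ X →
    ∀ a : Euc n →ᵃ[ℝ] ℝ,
      (∀ x ∈ frontier K, u x ≤ (a x : EReal)) → ∀ x ∈ K, u x ≤ (a x : EReal)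

/-- The Hessian matrix of `u` at `x`. -/
def hessMat {n : ℕ} (u : Euc n → ℝ) (x : Euc n) : Matrix (Fin n) (Fin n) ℝ :=
  fun i j => iteratedFDeriv ℝ 2 u x ![EuclideanSpace.single i 1, EuclideanSpace.single j 1]

structure IsDirichletSet {n : ℕ} (F : Set (SymMat n)) : Prop where
  nonempty : F.Nonempty
  ne_univ : F ≠ Set.univ
  isClosed : IsClosed F
  add_psd : ∀ A ∈ F, ∀ P : SymMat n, (P : Matrix (Fin n) (Fin n) ℝ).PosSemidef → A + P ∈ F

/-- The Dirichlet dual `F̃ = −(∼ Int F)`. -/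
def dirDual {n : ℕ} (F : Set (SymMat n)) : Set (SymMat n) := {A | -A ∉ interior F}

/-- A C² function `v` on `X` is of type `F`. -/
def IsTypeFC2 {n : ℕ} (F : Set (SymMat n)) (X : Set (Euc n)) (v : Euc n → ℝ) : Prop :=
  ContDiffOn ℝ 2 v X ∧ ∀ x ∈ X, ∃ A ∈ F, (A : Matrix (Fin n) (Fin n) ℝ) = hessMat v x

/-- An u.s.c. function `u` is of type `F` on `X`. -/
def IsTypeF {n : ℕ} (F : Set (SymMat n)) (X : Set (Euc n)) (u : Euc n → EReal) : Prop :=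
  ∀ v : Euc n → ℝ, IsTypeFC2 (dirDual F) X v → SubaffineOn X (fun x => u x + (v x : EReal))

/-- The ray set `F⃗` of `F`. -/
def raySet {n : ℕ} (F : Set (SymMat n)) : Set (SymMat n) :=
  closure {A : SymMat n | ∃ t₀ : ℝ, ∀ t : ℝ, t₀ ≤ t → t • A ∈ F}

/-- The bilinear form `⟨A v, w⟩` of a matrix. -/
def bilin {n : ℕ} (A : Matrix (Fin n) (Fin n) ℝ) (v w : Euc n) : ℝ :=
  ∑ i, ∑ j, A i j * v i * w j

/-- `A` is not negative definite. -/
def NotNegDef {n : ℕ} (A : SymMat n) : Prop :=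
  ¬ (-(A : Matrix (Fin n) (Fin n) ℝ)).PosDef

def IsLocalDefiningFn {n : ℕ} (Ω U : Set (Euc n)) (ρ : Euc n → ℝ) : Prop :=
  IsOpen U ∧ ContDiffOn ℝ (⊤ : ℕ∞) ρ U ∧ Ω ∩ U = {y ∈ U | ρ y < 0} ∧ ∀ y ∈ U, fderiv ℝ ρ y ≠ 0

def HasSmoothBoundary {n : ℕ} (Ω : Set (Euc n)) : Prop :=
  ∀ x ∈ frontier Ω, ∃ U ρ, x ∈ U ∧ IsLocalDefiningFn Ω U ρ

/-- `∂Ω` is strictly `G`-convex at `x`. -/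
def StrictlyConvexAt {n : ℕ} (G : Set (SymMat n)) (Ω : Set (Euc n)) (x : Euc n) : Prop :=
  ∃ U ρ, x ∈ U ∧ IsLocalDefiningFn Ω U ρ ∧
    ∃ B ∈ interior G, ∀ v w : Euc n, fderiv ℝ ρ x v = 0 → fderiv ℝ ρ x w = 0 →
      bilin (hessMat ρ x) v w = bilin (B : Matrix (Fin n) (Fin n) ℝ) v w

def symOne (n : ℕ) : SymMat n := ⟨1, selfAdjoint.mem_iff.mpr (IsSelfAdjoint.one _)⟩

/-- `u` is twice differentiable at `x` with Hessian `A`. -/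
def TwiceDiffWithHessAt {n : ℕ} (u : Euc n → ℝ) (x : Euc n)
    (A : Matrix (Fin n) (Fin n) ℝ) : Prop :=
  ∃ p : Euc n, (fun h : Euc n => u (x + h) - u x - ⟪p, h⟫ - 1/2 * bilin A h h)
      =o[𝓝 (0 : Euc n)] fun h => ‖h‖ ^ 2

theorem aux_A {n : ℕ} (X : Set (Euc n))
    (u : Euc n → EReal) (husc : UpperSemicontinuousOn u X) (hfin : ∀ x ∈ X, u x ≠ ⊤)
    (h : ¬ SubaffineOn X u) :
    ∃ x₀ ∈ X, ∃ a : Euc n →ᵃ[ℝ] ℝ, ∃ ε : ℝ, 0 < ε ∧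
        (∀ᶠ x in 𝓝 x₀, u x ≤ ((a x - ε * ‖x - x₀‖ ^ 2 : ℝ) : EReal)) ∧
        u x₀ = (a x₀ : EReal) := by
  unfold SubaffineOn at h
  push Not at h
  obtain ⟨K, hK, hKX, a, hfr, x₁, hx₁, hlt⟩ := h
  obtain ⟨c, hc⟩ : ∃ c : ℝ, u x₁ = (c : EReal) :=
    ⟨(u x₁).toReal, (EReal.coe_toReal (hfin x₁ (hKX hx₁)) (ne_bot_of_gt hlt)).symm⟩
  rw [hc, EReal.coe_lt_coe_iff] at hlt
  obtain ⟨R, hR⟩ := hK.isBounded.exists_norm_le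
  obtain ⟨ε, hε, hεδ⟩ : ∃ ε : ℝ, 0 < ε ∧ ε * R ^ 2 < c - a x₁ := by
    refine ⟨(c - a x₁) / (R ^ 2 + 1), div_pos (by linarith) (by positivity), ?_⟩
    rw [div_mul_eq_mul_div, div_lt_iff₀ (by positivity)]
    nlinarith [sq_nonneg R]
  have hg : Continuous fun x : Euc n => ((ε * ‖x‖ ^ 2 - a x : ℝ) : EReal) := by
    have ha : Continuous a := a.continuous_of_finiteDimensional
    exact continuous_coe_real_ereal.comp (by fun_prop)
  have hw : UpperSemicontinuousOn
      (fun x => u x + ((ε * ‖x‖ ^ 2 - a x : ℝ) : EReal)) K := by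
    refine (husc.mono hKX).add' (hg.upperSemicontinuous.upperSemicontinuousOn _) ?_
    intro x hx
    exact EReal.continuousAt_add (Or.inr (EReal.coe_ne_bot _)) (Or.inr (EReal.coe_ne_top _))
  obtain ⟨x₀, hx₀, hmax⟩ := hw.exists_isMaxOn ⟨x₁, hx₁⟩ hK
  have hmax' : ∀ x ∈ K, u x + ((ε * ‖x‖ ^ 2 - a x : ℝ) : EReal) ≤
      u x₀ + ((ε * ‖x₀‖ ^ 2 - a x₀ : ℝ) : EReal) := fun x hx => hmax hx
  have h1 := hmax' x₁ hx₁
  have hbot : u x₀ ≠ ⊥ := by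
    intro hb
    rw [hb, EReal.bot_add, hc, ← EReal.coe_add] at h1
    exact EReal.coe_ne_bot _ (le_bot_iff.1 h1)
  obtain ⟨d, hd⟩ : ∃ d : ℝ, u x₀ = (d : EReal) :=
    ⟨(u x₀).toReal, (EReal.coe_toReal (hfin x₀ (hKX hx₀)) hbot).symm⟩
  rw [hd, hc, ← EReal.coe_add, ← EReal.coe_add, EReal.coe_le_coe_iff] at h1
  have hint : x₀ ∈ interior K := by
    by_contra hni
    have h2 := hfr x₀ ⟨subset_closure hx₀, hni⟩
    rw [hd, EReal.coe_le_coe_iff] at h2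
    have h3 : ‖x₀‖ ^ 2 ≤ R ^ 2 := pow_le_pow_left₀ (norm_nonneg _) (hR x₀ hx₀) 2
    nlinarith [sq_nonneg ‖x₁‖]
  let b : Euc n →ᵃ[ℝ] ℝ := a + AffineMap.const ℝ (Euc n) (d - a x₀ + 2 * ε * ‖x₀‖ ^ 2)
    - ((2 * ε) • (innerSL ℝ x₀).toLinearMap).toAffineMap
  have hb : ∀ x, b x = a x + (d - a x₀ + 2 * ε * ‖x₀‖ ^ 2) - 2 * ε * inner ℝ x₀ x := by
    intro x; simp [b]
  refine ⟨x₀, hKX hx₀, b, ε, hε, ?_, ?_⟩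
  · filter_upwards [isOpen_interior.mem_nhds hint] with x hx
    have h4 := hmax' x (interior_subset hx)
    by_cases hxb : u x = ⊥
    · rw [hxb]; exact bot_le
    obtain ⟨e, he⟩ : ∃ e : ℝ, u x = (e : EReal) :=
      ⟨(u x).toReal, (EReal.coe_toReal (hfin x (hKX (interior_subset hx))) hxb).symm⟩
    rw [hd, he, ← EReal.coe_add, ← EReal.coe_add, EReal.coe_le_coe_iff] at h4
    rw [he, EReal.coe_le_coe_iff, hb, norm_sub_sq_real, real_inner_comm]
    linarith
  · rw [hd, hb, real_inner_self_eq_norm_sq]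
    congr 1; ring

theorem aux_B {n : ℕ} (u : Euc n → EReal) (x₀ : Euc n) (a : Euc n →ᵃ[ℝ] ℝ) (ε : ℝ) (hε : 0 < ε)
    (hev : ∀ᶠ x in 𝓝 x₀, u x ≤ ((a x - ε * ‖x - x₀‖ ^ 2 : ℝ) : EReal))
    (h0 : u x₀ = (a x₀ : EReal)) (B : Set (Euc n)) (hB : IsOpen B) (hxB : x₀ ∈ B) :
    ¬ SubaffineOn B u := by
  intro hS
  obtain ⟨r, hr, hsub⟩ := Metric.nhds_basis_closedBall.mem_iff.1
    (Filter.inter_mem hev (hB.mem_nhds hxB))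
  have := hS (closedBall x₀ r) (isCompact_closedBall _ _) (fun x hx => (hsub hx).2)
    (a - AffineMap.const ℝ (Euc n) (ε * r ^ 2)) (by
      intro x hx
      have hx' := frontier_closedBall_subset_sphere hx
      have h1 := (hsub (sphere_subset_closedBall hx')).1
      rw [mem_sphere_iff_norm] at hx'
      simpa [hx'] using h1) x₀ (mem_closedBall_self hr.le)
  rw [h0, EReal.coe_le_coe_iff] at this
  have h2 : 0 < ε * r ^ 2 := by positivity
  simp at this
  linarith

/-- Lemma 2.2: locally subaffine implies subaffine, and the
characterization of failure of (local) subaffinity. -/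
theorem locally_subaffine_iff {n : ℕ} (X : Set (Euc n)) (hX : IsOpen X)
    (u : Euc n → EReal) (husc : UpperSemicontinuousOn u X) (hfin : ∀ x ∈ X, u x ≠ ⊤) :
    ((∀ x ∈ X, ∃ B, IsOpen B ∧ x ∈ B ∧ B ⊆ X ∧ SubaffineOn B u) → SubaffineOn X u) ∧
    (¬ (∀ x ∈ X, ∃ B, IsOpen B ∧ x ∈ B ∧ B ⊆ X ∧ SubaffineOn B u) ↔
      ∃ x₀ ∈ X, ∃ a : Euc n →ᵃ[ℝ] ℝ, ∃ ε : ℝ, 0 < ε ∧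
        (∀ᶠ x in 𝓝 x₀, u x ≤ ((a x - ε * ‖x - x₀‖ ^ 2 : ℝ) : EReal)) ∧
        u x₀ = (a x₀ : EReal)) := by
  have hA := aux_A X u husc hfin
  have hB : (∃ x₀ ∈ X, ∃ a : Euc n →ᵃ[ℝ] ℝ, ∃ ε : ℝ, 0 < ε ∧
        (∀ᶠ x in 𝓝 x₀, u x ≤ ((a x - ε * ‖x - x₀‖ ^ 2 : ℝ) : EReal)) ∧
        u x₀ = (a x₀ : EReal)) →
      ¬ (∀ x ∈ X, ∃ B, IsOpen B ∧ x ∈ B ∧ B ⊆ X ∧ SubaffineOn B u) := by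
    rintro ⟨x₀, hx₀, a, ε, hε, hev, h0⟩ hloc
    obtain ⟨B, hB, hxB, -, hS⟩ := hloc x₀ hx₀
    exact aux_B u x₀ a ε hε hev h0 B hB hxB hS
  refine ⟨fun hloc => ?_, fun hn => hA fun hS => hn fun x hx => ⟨X, hX, hx, subset_rfl, hS⟩, hB⟩
  by_contra hS
  exact hB (hA hS) hloc
end
end

section
/- Let K ⊂ ℝⁿ be compact and u : K → [−∞, ∞) upper semicontinuous. If u is locally subaffine on the interior of K (every point of Int K has an open neighborhood contained in Int K on which u is subaffine), then sup_K u ≤ sup_{∂K} u. -/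
open Set Metric Filter MeasureTheory Asymptotics
open scoped Topology BigOperators RealInnerProductSpace

noncomputable section

/-- Proposition 2.3, Maximum Principle: if `u` is u.s.c. on a compact
set `K` and locally subaffine on its interior, then `sup_K u ≤ sup_{∂K} u`. -/
theorem maximum_principle_subaffine {n : ℕ} (K : Set (Euc n)) (hK : IsCompact K)
    (u : Euc n → EReal) (husc : UpperSemicontinuousOn u K) (hfin : ∀ x ∈ K, u x ≠ ⊤)
    (hloc : ∀ x ∈ interior K, ∃ B, IsOpen B ∧ x ∈ B ∧ B ⊆ interior K ∧ SubaffineOn B u) :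
    ⨆ x ∈ K, u x ≤ ⨆ x ∈ frontier K, u x := by
  by_contra hcon
  rw [not_le] at hcon
  obtain ⟨x0, hx0⟩ := lt_iSup_iff.mp hcon
  obtain ⟨hx0K, hx0⟩ := lt_iSup_iff.mp hx0
  obtain ⟨c, hc1, hc2⟩ := EReal.lt_iff_exists_real_btwn.mp hx0
  obtain ⟨t, ht⟩ : ∃ t : ℝ, u x0 = (t : EReal) :=
    ⟨(u x0).toReal, (EReal.coe_toReal (hfin x0 hx0K) (ne_bot_of_gt hc2)).symm⟩
  rw [ht, EReal.coe_lt_coe_iff] at hc2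
  obtain ⟨R, hR⟩ := hK.isBounded.exists_norm_le
  have hM : ∀ x ∈ K, ‖x‖ ^ 2 ≤ R ^ 2 + 1 := fun x hx => by
    nlinarith [hR x hx, norm_nonneg x]
  set M := R ^ 2 + 1 with hMdef
  have hM0 : 0 < M := by positivity
  set ε := (t - c) / M with hε
  have hε0 : 0 < ε := div_pos (by linarith) hM0
  have hεM : ε * M = t - c := div_mul_cancel₀ _ hM0.ne'
  have husc2 : UpperSemicontinuousOn (fun x => u x + ((ε * ‖x‖ ^ 2 : ℝ) : EReal)) K := by
    refine UpperSemicontinuousOn.add' husc ?_ ?_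
    · refine ContinuousOn.upperSemicontinuousOn (Continuous.continuousOn ?_)
      exact continuous_coe_real_ereal.comp (by fun_prop)
    · intro x hx
      exact EReal.continuousAt_add (Or.inr (EReal.coe_ne_bot _)) (Or.inr (EReal.coe_ne_top _))
  obtain ⟨y, hyK, hy⟩ := husc2.exists_isMaxOn ⟨x0, hx0K⟩ hK
  have hy' : ∀ x ∈ K, u x + ((ε * ‖x‖ ^ 2 : ℝ) : EReal) ≤ u y + ((ε * ‖y‖ ^ 2 : ℝ) : EReal) :=
    fun x hx => hy hx
  have hy0 := hy' x0 hx0K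
  have hybot : u y ≠ ⊥ := by
    intro h
    rw [h, ht, EReal.bot_add, ← EReal.coe_add, le_bot_iff] at hy0
    exact EReal.coe_ne_bot _ hy0
  obtain ⟨s, hs⟩ : ∃ s : ℝ, u y = (s : EReal) :=
    ⟨(u y).toReal, (EReal.coe_toReal (hfin y hyK) hybot).symm⟩
  rw [hs, ht, ← EReal.coe_add, ← EReal.coe_add, EReal.coe_le_coe_iff] at hy0
  have hyint : y ∈ interior K := by
    by_contra hni
    have hyf : y ∈ frontier K := ⟨subset_closure hyK, hni⟩
    have h1 : u y < c := lt_of_le_of_lt (le_iSup₂ (f := fun x (_ : x ∈ frontier K) => u x) y hyf) hc1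
    rw [hs, EReal.coe_lt_coe_iff] at h1
    have h2 := mul_le_mul_of_nonneg_left (hM y hyK) hε0.le
    have h3 : 0 ≤ ε * ‖x0‖ ^ 2 := by positivity
    linarith
  obtain ⟨B, hBo, hyB, hBK, hB⟩ := hloc y hyint
  obtain ⟨r, hr, hrB⟩ := Metric.nhds_basis_closedBall.mem_iff.mp (hBo.mem_nhds hyB)
  let a : Euc n →ᵃ[ℝ] ℝ :=
    ((-(2 * ε)) • (innerₛₗ ℝ y)).toAffineMap + AffineMap.const ℝ (Euc n) (s + 2 * ε * ‖y‖ ^ 2 - ε * r ^ 2)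
  have ha : ∀ x, a x = -(2 * ε) * ⟪y, x⟫ + (s + 2 * ε * ‖y‖ ^ 2 - ε * r ^ 2) := fun x => by
    simp [a]
  have key := hB (closedBall y r) (isCompact_closedBall y r) hrB a ?_ y (mem_closedBall_self hr.le)
  · rw [hs, ha, EReal.coe_le_coe_iff, real_inner_self_eq_norm_sq] at key
    have : 0 < ε * r ^ 2 := by positivity
    linarith
  · intro x hx
    have hxs := frontier_closedBall_subset_sphere hx
    rw [mem_sphere, dist_eq_norm] at hxs
    have hxK : x ∈ K := interior_subset (hBK (hrB (mem_closedBall.mpr (by rw [dist_eq_norm, hxs]))))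
    have h1 := hy' x hxK
    by_cases hxb : u x = ⊥
    · rw [hxb]; exact bot_le
    obtain ⟨v, hv⟩ : ∃ v : ℝ, u x = (v : EReal) :=
      ⟨(u x).toReal, (EReal.coe_toReal (hfin x hxK) hxb).symm⟩
    rw [hv, hs, ← EReal.coe_add, ← EReal.coe_add, EReal.coe_le_coe_iff] at h1
    rw [hv, ha, EReal.coe_le_coe_iff]
    have h2 := norm_sub_sq_real x y
    rw [hxs, real_inner_comm] at h2
    rw [h2]
    linarith
end
end

section
/- Let X ⊂ ℝⁿ be open and u : X → ℝ twice continuously differentiable. Then u is subaffine on X if and only if for every x ∈ X the Hessian matrix Hess_x u is not negative definite, i.e., Hess_x u has at least one eigenvalue ≥ 0. -/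
open Set Metric Filter MeasureTheory Asymptotics
open scoped Topology BigOperators RealInnerProductSpace

noncomputable section

lemma aux_second {g g' : ℝ → ℝ} {c : ℝ} (h1 : ∀ᶠ t in 𝓝 (0:ℝ), HasDerivAt g (g' t) t)
    (h2 : HasDerivAt g' c 0) (hm : IsLocalMax g 0) : c ≤ 0 := by
  by_contra! hc
  have e : deriv g =ᶠ[𝓝 0] g' := h1.mono fun t ht => ht.deriv
  have e2 : deriv (deriv g) 0 = c := by rw [e.deriv_eq, h2.deriv]
  have hmin : IsLocalMin g 0 :=
    isLocalMin_of_deriv_deriv_pos (by rw [e2]; exact hc) hm.deriv_eq_zero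
      h1.self_of_nhds.continuousAt
  have hconst : g =ᶠ[𝓝 0] fun _ => g 0 := by
    filter_upwards [hm, hmin] with t a b
    exact le_antisymm a b
  have e3 : deriv g =ᶠ[𝓝 0] fun _ => 0 := by
    have := hconst.deriv
    simpa using this
  have : deriv (deriv g) 0 = 0 := by rw [e3.deriv_eq]; simp
  linarith

lemma aux_hess {n : ℕ} (u : Euc n → ℝ) (x : Euc n) (v : Euc n) :
    (v.ofLp) ⬝ᵥ ((hessMat u x).mulVec v.ofLp) = fderiv ℝ (fderiv ℝ u) x v v := by
  have hv : v = ∑ i, v i • EuclideanSpace.single i (1:ℝ) := by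
    ext j
    simp [Finset.sum_apply, Pi.single_apply]
  conv_rhs => rw [hv]
  simp only [map_sum, map_smul, ContinuousLinearMap.sum_apply, ContinuousLinearMap.smul_apply,
    dotProduct, Matrix.mulVec, hessMat, iteratedFDeriv_two_apply, smul_eq_mul, Finset.mul_sum]
  rw [Finset.sum_comm]
  refine Finset.sum_congr rfl fun i _ => Finset.sum_congr rfl fun j _ => ?_
  simp
  ring

lemma aux_posDef {n : ℕ} (u : Euc n → ℝ) (x : Euc n) (hu : ContDiffAt ℝ 2 u x) :
    (-(hessMat u x)).PosDef ↔ ∀ v : Euc n, v ≠ 0 → fderiv ℝ (fderiv ℝ u) x v v < 0 := by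
  have hs : IsSymmSndFDerivAt ℝ u x := hu.isSymmSndFDerivAt (by simp)
  rw [Matrix.posDef_iff_dotProduct_mulVec]
  constructor
  · rintro ⟨_, h⟩ v hv
    have := @h v.ofLp (by simpa using hv)
    rw [star_trivial, Matrix.neg_mulVec, dotProduct_neg, aux_hess] at this
    linarith
  · intro h
    refine ⟨?_, ?_⟩
    · ext i j
      simp only [Matrix.conjTranspose_apply, Matrix.neg_apply, star_trivial, hessMat,
        iteratedFDeriv_two_apply]
      exact congrArg _ (hs _ _)
    · intro v hv
      have := h (WithLp.toLp 2 v) (by simpa using hv)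
      rw [← aux_hess] at this
      rw [star_trivial, Matrix.neg_mulVec, dotProduct_neg]
      simpa using this

lemma aux_d1 {n : ℕ} {u : Euc n → ℝ} {y v : Euc n} {t : ℝ} (hu : ContDiffAt ℝ 2 u (y + t • v)) :
    HasDerivAt (fun t : ℝ => u (y + t • v)) (fderiv ℝ u (y + t • v) v) t := by
  have h := (hu.differentiableAt (by norm_num)).hasFDerivAt
  have hl : HasDerivAt (fun t : ℝ => y + t • v) v t := by
    simpa using ((hasDerivAt_id t).smul_const v).const_add y
  exact h.comp_hasDerivAt t hl

lemma aux_d2 {n : ℕ} {u : Euc n → ℝ} {y v : Euc n} {t : ℝ} (hu : ContDiffAt ℝ 2 u (y + t • v)) :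
    HasDerivAt (fun t : ℝ => fderiv ℝ u (y + t • v) v)
      (fderiv ℝ (fderiv ℝ u) (y + t • v) v v) t := by
  have h0 : ContDiffAt ℝ 1 (fderiv ℝ u) (y + t • v) := hu.fderiv_right (by norm_num)
  have h := (h0.differentiableAt (by norm_num)).hasFDerivAt
  have hl : HasDerivAt (fun t : ℝ => y + t • v) v t := by
    simpa using ((hasDerivAt_id t).smul_const v).const_add y
  have h3 := h.comp_hasDerivAt t hl
  simpa using h3.clm_apply (hasDerivAt_const t v)

lemma aux_tangent {n : ℕ} {u : Euc n → ℝ} {y v : Euc n}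
    (hu : ∀ t ∈ Icc (0:ℝ) 1, ContDiffAt ℝ 2 u (y + t • v))
    (hneg : ∀ t ∈ Icc (0:ℝ) 1, fderiv ℝ (fderiv ℝ u) (y + t • v) v v < 0) :
    u (y + v) < u y + fderiv ℝ u y v := by
  obtain ⟨c, hc, h1⟩ := exists_hasDerivAt_eq_slope (fun t : ℝ => u (y + t • v))
    (fun t => fderiv ℝ u (y + t • v) v) (zero_lt_one' ℝ)
    (fun t ht => (aux_d1 (hu t ht)).continuousAt.continuousWithinAt)
    (fun t ht => aux_d1 (hu t (Ioo_subset_Icc_self ht)))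
  have hsub : ∀ t ∈ Icc (0:ℝ) c, t ∈ Icc (0:ℝ) 1 := fun t ht => ⟨ht.1, ht.2.trans hc.2.le⟩
  obtain ⟨d, hd, h2⟩ := exists_hasDerivAt_eq_slope (fun t : ℝ => fderiv ℝ u (y + t • v) v)
    (fun t => fderiv ℝ (fderiv ℝ u) (y + t • v) v v) hc.1
    (fun t ht => (aux_d2 (hu t (hsub t ht))).continuousAt.continuousWithinAt)
    (fun t ht => aux_d2 (hu t (hsub t (Ioo_subset_Icc_self ht))))
  have h3 := hneg d (hsub d (Ioo_subset_Icc_self hd))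
  simp only [h2, zero_smul, add_zero, sub_zero] at h3
  rw [div_neg_iff] at h3
  simp only [one_smul, zero_smul, add_zero, sub_zero, div_one] at h1
  rcases h3 with h3 | h3
  · linarith [hc.1, h3.2]
  · linarith [h3.1]

lemma aux_nhds {n : ℕ} {u : Euc n → ℝ} {x : Euc n} (hu : ContDiffAt ℝ 2 u x)
    (hneg : ∀ v : Euc n, v ≠ 0 → fderiv ℝ (fderiv ℝ u) x v v < 0) :
    ∀ᶠ y in 𝓝 x, ∀ v : Euc n, v ≠ 0 → fderiv ℝ (fderiv ℝ u) y v v < 0 := by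
  have h0 : ContDiffAt ℝ 1 (fderiv ℝ u) x := hu.fderiv_right (by norm_num)
  have h1 : ContDiffAt ℝ 0 (fderiv ℝ (fderiv ℝ u)) x := h0.fderiv_right (by norm_num)
  have hc : ContinuousAt (fderiv ℝ (fderiv ℝ u)) x := h1.continuousAt
  have key : ∀ᶠ y in 𝓝 x, ∀ v ∈ sphere (0 : Euc n) 1, fderiv ℝ (fderiv ℝ u) y v v < 0 := by
    refine (isCompact_sphere (0 : Euc n) 1).eventually_forall_of_forall_eventually ?_
    intro v hv
    have hcont : ContinuousAt (fun z : Euc n × Euc n => fderiv ℝ (fderiv ℝ u) z.1 z.2 z.2)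
        (x, v) := by
      have : ContinuousAt (fun z : Euc n × Euc n => fderiv ℝ (fderiv ℝ u) z.1) (x, v) :=
        ContinuousAt.comp (f := fun z : Euc n × Euc n => z.1) hc continuousAt_fst
      exact (this.clm_apply continuousAt_snd).clm_apply continuousAt_snd
    exact hcont.eventually_lt continuousAt_const (hneg v (ne_of_mem_sphere hv one_ne_zero))
  filter_upwards [key] with y hy v hv
  have hn : 0 < ‖v‖ := norm_pos_iff.2 hv
  have := hy (‖v‖⁻¹ • v) (by simp [norm_smul, hn.ne'])
  simp only [map_smul, ContinuousLinearMap.smul_apply, smul_eq_mul] at this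
  by_contra! h
  have : 0 ≤ ‖v‖⁻¹ * (‖v‖⁻¹ * fderiv ℝ (fderiv ℝ u) y v v) := by positivity
  linarith

/-- Proposition 2.4: a C² function is subaffine on an open set `X`
iff its Hessian is nowhere negative definite on `X`. -/
theorem c2_subaffine_iff_hessian_not_negDef {n : ℕ} (X : Set (Euc n)) (hX : IsOpen X)
    (u : Euc n → ℝ) (hu : ContDiffOn ℝ 2 u X) :
    SubaffineOn X (fun x => (u x : EReal)) ↔ ∀ x ∈ X, ¬ (-(hessMat u x)).PosDef := by
  have hat : ∀ x ∈ X, ContDiffAt ℝ 2 u x := fun x hx => hu.contDiffAt (hX.mem_nhds hx)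
  constructor
  · intro hsub x hx hpd
    rw [aux_posDef u x (hat x hx)] at hpd
    obtain ⟨r, hr, hball⟩ := Metric.nhds_basis_closedBall.mem_iff.1
      (Filter.inter_mem (hX.mem_nhds hx) (aux_nhds (hat x hx) hpd))
    have htan : ∀ y ∈ sphere x r, u y < u x + fderiv ℝ u x (y - x) := by
      intro y hy
      have hmem : ∀ t ∈ Icc (0:ℝ) 1, x + t • (y - x) ∈ closedBall x r := by
        intro t ht
        rw [mem_closedBall, dist_eq_norm, add_sub_cancel_left, norm_smul, Real.norm_eq_abs,
          abs_of_nonneg ht.1, ← dist_eq_norm, mem_sphere.1 hy]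
        nlinarith [ht.2]
      have hne : y - x ≠ 0 := sub_ne_zero.2 (ne_of_mem_sphere hy hr.ne')
      have := aux_tangent (u := u) (y := x) (v := y - x)
        (fun t ht => hat _ (hball (hmem t ht)).1)
        (fun t ht => (hball (hmem t ht)).2 _ hne)
      simpa using this
    have hcts : ContinuousOn (fun y => u y - (u x + fderiv ℝ u x (y - x))) (sphere x r) := by
      refine ContinuousOn.sub (hu.continuousOn.mono fun y hy =>
        (hball (sphere_subset_closedBall hy)).1) ?_
      fun_prop
    obtain ⟨δ, hδ, hδs⟩ : ∃ δ > 0, ∀ y ∈ sphere x r, u y ≤ u x + fderiv ℝ u x (y - x) - δ := by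
      rcases (sphere x r).eq_empty_or_nonempty with he | hne
      · exact ⟨1, one_pos, by simp [he]⟩
      · obtain ⟨z, hz, hmax⟩ := (isCompact_sphere x r).exists_isMaxOn hne hcts
        refine ⟨u x + fderiv ℝ u x (z - x) - u z, by linarith [htan z hz], fun y hy => ?_⟩
        have := hmax hy
        simp only [mem_setOf_eq] at this
        linarith
    let a : Euc n →ᵃ[ℝ] ℝ := (fderiv ℝ u x).toLinearMap.toAffineMap +
      AffineMap.const ℝ (Euc n) (u x - fderiv ℝ u x x - δ)
    have ha : ∀ y, a y = u x + fderiv ℝ u x (y - x) - δ := by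
      intro y
      simp [a]
      ring
    have h := hsub (closedBall x r) (isCompact_closedBall x r) (fun y hy => (hball hy).1) a
      (fun y hy => by
        rw [EReal.coe_le_coe_iff, ha]
        exact hδs y (frontier_closedBall_subset_sphere hy)) x (mem_closedBall_self hr.le)
    rw [EReal.coe_le_coe_iff, ha] at h
    simp at h
    linarith
  · intro hH K hK hKX a hfr x0 hx0
    rw [EReal.coe_le_coe_iff]
    by_contra! hlt
    obtain ⟨R, hR0, hR⟩ : ∃ R > 0, ∀ y ∈ K, ‖y‖ ^ 2 < R := by
      obtain ⟨C, hC⟩ := hK.isBounded.exists_norm_le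
      refine ⟨C ^ 2 + 1, by positivity, fun y hy => ?_⟩
      have := hC y hy
      nlinarith [norm_nonneg y]
    set ε := (u x0 - a x0) / R with hε
    have hε0 : 0 < ε := div_pos (by linarith) hR0
    have hεR : ε * R = u x0 - a x0 := by rw [hε]; field_simp
    have hacont : Continuous a := a.continuous_of_finiteDimensional
    have hcts : ContinuousOn (fun y => u y - a y + ε * ‖y‖ ^ 2) K := by
      refine ContinuousOn.add (ContinuousOn.sub (hu.continuousOn.mono hKX) hacont.continuousOn) ?_
      fun_prop
    obtain ⟨y, hyK, hmax⟩ := hK.exists_isMaxOn ⟨x0, hx0⟩ hcts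
    have hyint : y ∈ interior K := by
      by_contra hni
      have hyf : y ∈ frontier K := ⟨subset_closure hyK, hni⟩
      have h1 := hfr y hyf
      rw [EReal.coe_le_coe_iff] at h1
      have h2 := hmax hx0
      simp only [mem_setOf_eq] at h2
      have h3 := hR y hyK
      have h4 : 0 ≤ ε * ‖x0‖ ^ 2 := by positivity
      nlinarith
    have hyX := hKX hyK
    apply hH y hyX
    rw [aux_posDef u y (hat y hyX)]
    intro v hv
    have hline : Continuous (fun t : ℝ => y + t • v) := by fun_prop
    have hev : ∀ᶠ t in 𝓝 (0:ℝ), y + t • v ∈ interior K :=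
      hline.continuousAt.eventually_mem (by simpa using isOpen_interior.mem_nhds hyint)
    have hform : ∀ t : ℝ, u (y + t • v) - (a y + t * a.linear v)
        + ε * (‖y‖ ^ 2 + 2 * (t * ⟪y, v⟫) + t ^ 2 * ‖v‖ ^ 2)
        = u (y + t • v) - a (y + t • v) + ε * ‖y + t • v‖ ^ 2 := by
      intro t
      have e1 : a (y + t • v) = a y + t * a.linear v := by
        have := a.map_vadd y (t • v)
        simp only [vadd_eq_add, map_smul, smul_eq_mul] at this
        rw [add_comm y, this, add_comm]
      rw [e1, norm_add_sq_real, inner_smul_right, norm_smul, mul_pow, Real.norm_eq_abs, sq_abs]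
    have hle := aux_second
      (g := fun t : ℝ => u (y + t • v) - (a y + t * a.linear v)
        + ε * (‖y‖ ^ 2 + 2 * (t * ⟪y, v⟫) + t ^ 2 * ‖v‖ ^ 2))
      (g' := fun t : ℝ => fderiv ℝ u (y + t • v) v - a.linear v
        + ε * (2 * ⟪y, v⟫ + 2 * t * ‖v‖ ^ 2))
      (c := fderiv ℝ (fderiv ℝ u) y v v + ε * (2 * ‖v‖ ^ 2)) ?_ ?_ ?_
    · have : 0 < ε * (2 * ‖v‖ ^ 2) := by
        have := norm_pos_iff.2 hv
        positivity
      linarith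
    · filter_upwards [hev] with t ht
      have h1 := aux_d1 (hat _ (hKX (interior_subset ht)))
      have h2 : HasDerivAt (fun t : ℝ => a y + t * a.linear v) (a.linear v) t := by
        simpa using ((hasDerivAt_id t).mul_const (a.linear v)).const_add (a y)
      have h3 : HasDerivAt (fun t : ℝ => ε * (‖y‖ ^ 2 + 2 * (t * ⟪y, v⟫) + t ^ 2 * ‖v‖ ^ 2))
          (ε * (2 * ⟪y, v⟫ + 2 * t * ‖v‖ ^ 2)) t := by
        have p1 := (((hasDerivAt_id t).mul_const ⟪y, v⟫).const_mul 2).const_add (‖y‖ ^ 2)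
        have p2 := ((hasDerivAt_id t).pow 2).mul_const (‖v‖ ^ 2)
        simpa using (p1.add p2).const_mul ε
      exact (h1.sub h2).add h3
    · have h1 := aux_d2 (u := u) (y := y) (v := v) (t := 0) (by simpa using hat y hyX)
      simp only [zero_smul, add_zero] at h1
      have h3 : HasDerivAt (fun t : ℝ => ε * (2 * ⟪y, v⟫ + 2 * t * ‖v‖ ^ 2))
          (ε * (2 * ‖v‖ ^ 2)) 0 := by
        simpa using ((((hasDerivAt_id (0:ℝ)).const_mul 2).mul_const (‖v‖ ^ 2)).const_add
          (2 * ⟪y, v⟫)).const_mul ε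
      exact (h1.sub_const _).add h3
    · filter_upwards [hev] with t ht
      have := hmax (interior_subset ht)
      simp only [mem_setOf_eq] at this
      rw [hform, hform]
      simpa using this
end
end

section
/- Let X ⊂ ℝⁿ be open and v : X → [−∞, ∞) upper semicontinuous. Then v is subaffine on X if and only if u + v is subaffine on X for every function u : X → ℝ whose restriction to each open ball contained in X is convex (with the convention −∞ + t = −∞). -/
open Set Metric Filter MeasureTheory Asymptotics
open scoped Topology BigOperators RealInnerProductSpace

noncomputable section

theorem aux_subgrad {n : ℕ} (B : Set (Euc n)) (hB : IsOpen B) (u : Euc n → ℝ)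
    (hu : ConvexOn ℝ B u) (z : Euc n) (hz : z ∈ B) :
    ∃ l : Euc n →L[ℝ] ℝ, ∀ x ∈ B, u z + (l x - l z) ≤ u x := by
  have hc : ContinuousOn u B := hu.continuousOn hB
  have hS : IsOpen {p : Euc n × ℝ | p.1 ∈ B ∧ u p.1 < p.2} := by
    rw [isOpen_iff_mem_nhds]
    rintro ⟨x, t⟩ ⟨hx, ht⟩
    have h1 : ContinuousAt (fun p : Euc n × ℝ => u p.1) (x, t) :=
      ContinuousAt.comp (f := Prod.fst) (g := u) (hc.continuousAt (hB.mem_nhds hx)) continuousAt_fst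
    have h2 : ∀ᶠ p : Euc n × ℝ in 𝓝 (x, t), u p.1 < p.2 :=
      h1.eventually_lt continuousAt_snd ht
    have h3 : ∀ᶠ p : Euc n × ℝ in 𝓝 (x, t), p.1 ∈ B :=
      continuousAt_fst.eventually (hB.mem_nhds hx)
    filter_upwards [h2, h3] with p a b using ⟨b, a⟩
  obtain ⟨f, hf⟩ := geometric_hahn_banach_open_point (x := (z, u z))
    hu.convex_strict_epigraph hS (by simp)
  have hdec : ∀ (x : Euc n) (t : ℝ), f (x, t) = f (x, 0) + t * f (0, 1) := by
    intro x t
    have : (x, t) = (x, (0:ℝ)) + t • ((0 : Euc n), (1:ℝ)) := by simp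
    rw [this, map_add, map_smul, smul_eq_mul]
  set s := f (0, 1) with hs
  have hs0 : s < 0 := by
    have := hf (z, u z + 1) ⟨hz, by simp⟩
    rw [hdec, hdec z (u z)] at this
    nlinarith
  refine ⟨-(s⁻¹ • f.comp (ContinuousLinearMap.inl ℝ (Euc n) ℝ)), fun x hx => ?_⟩
  have key : s * (u x - u z) ≤ f (z, 0) - f (x, 0) := by
    refine le_of_forall_pos_le_add fun e he => ?_
    have := hf (x, u x + e / (-s)) ⟨hx, by have := div_pos he (neg_pos.2 hs0); simp only; linarith⟩
    rw [hdec, hdec z (u z)] at this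
    have h4 : e / (-s) * s = -e := by rw [div_neg, neg_mul, div_mul_cancel₀ _ hs0.ne]
    nlinarith
  have h5 : s⁻¹ * (f (z, 0) - f (x, 0)) ≤ u x - u z := by
    have := mul_le_mul_of_nonpos_left key (inv_nonpos.2 hs0.le)
    rwa [← mul_assoc, inv_mul_cancel₀ hs0.ne, one_mul] at this
  simp
  linarith

/-- Proposition 2.5: `v` is subaffine on `X` iff `u + v` is subaffine
on `X` for every function `u` that is convex on every open ball contained in `X`. -/
theorem subaffine_iff_add_convex {n : ℕ} (X : Set (Euc n)) (hX : IsOpen X)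
    (v : Euc n → EReal) (husc : UpperSemicontinuousOn v X) (hfin : ∀ x ∈ X, v x ≠ ⊤) :
    SubaffineOn X v ↔
      ∀ u : Euc n → ℝ,
        (∀ (c : Euc n) (r : ℝ), Metric.ball c r ⊆ X → ConvexOn ℝ (Metric.ball c r) u) →
        SubaffineOn X (fun x => (u x : EReal) + v x) := by
  constructor
  swap
  · intro h
    have := h (fun _ => 0) (fun c r _ => convexOn_const 0 (convex_ball c r))
    simpa using this
  intro hv u hu K hK hKX a hbd x0 hx0
  by_contra hlt
  simp only [not_le] at hlt
  have huc : ContinuousOn u X := by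
    intro x hx
    obtain ⟨r, hr, hrX⟩ := Metric.isOpen_iff.1 hX x hx
    exact (((hu x r hrX).continuousOn isOpen_ball).continuousAt
      (isOpen_ball.mem_nhds (mem_ball_self hr))).continuousWithinAt
  have hac : Continuous a := a.continuous_of_finiteDimensional
  obtain ⟨V0, hV0⟩ : ∃ V : ℝ, v x0 = V := by
    refine ⟨(v x0).toReal, (EReal.coe_toReal (hfin _ (hKX hx0)) fun h => ?_).symm⟩
    rw [h] at hlt; simp at hlt
  rw [hV0] at hlt
  have hlt' : a x0 < u x0 + V0 := by exact_mod_cast hlt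
  obtain ⟨R, hR0, hR⟩ : ∃ R : ℝ, 0 < R ∧ ∀ x ∈ K, ‖x - x0‖ ^ 2 ≤ R := by
    obtain ⟨C, hC⟩ := hK.bddAbove_image (f := fun x => ‖x - x0‖ ^ 2) (by fun_prop)
    refine ⟨max C 1, by positivity, fun x hx => le_max_of_le_left (hC ⟨x, hx, rfl⟩)⟩
  set δ := u x0 + V0 - a x0 with hδ
  have hδ0 : 0 < δ := by linarith
  set ε := δ / (2 * R) with hε
  have hε0 : 0 < ε := by positivity
  have hεR : ε * R < δ := by
    have : ε * R = δ / 2 := by rw [hε]; field_simp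
    linarith
  set q : Euc n → ℝ := fun x => u x - a x + ε * ‖x - x0‖ ^ 2 with hq
  have hqc : ContinuousOn q K := by
    have := huc.mono hKX
    have := hac.continuousOn (s := K)
    fun_prop
  have hg : UpperSemicontinuousOn (fun x => (q x : EReal) + v x) K := by
    refine UpperSemicontinuousOn.add' ?_ (husc.mono hKX) ?_
    · exact (continuous_coe_real_ereal.comp_continuousOn hqc).upperSemicontinuousOn
    · intro x hx
      exact EReal.continuousAt_add (by simp) (by simp)
  obtain ⟨z, hz, hmax⟩ := hg.exists_isMaxOn ⟨x0, hx0⟩ hK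
  have hmax' : ∀ x ∈ K, (q x : EReal) + v x ≤ q z + v z := fun x hx => hmax hx
  obtain ⟨V1, hV1⟩ : ∃ V : ℝ, v z = V := by
    refine ⟨(v z).toReal, (EReal.coe_toReal (hfin _ (hKX hz)) fun h => ?_).symm⟩
    have := hmax' x0 hx0
    rw [h, hV0, ← EReal.coe_add] at this; simp at this
  have hz0 : q x0 + V0 ≤ q z + V1 := by
    have := hmax' x0 hx0
    rw [hV0, hV1] at this
    exact_mod_cast this
  have hzi : z ∈ interior K := by
    by_contra hni
    have hfr := hbd z ⟨subset_closure hz, hni⟩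
    simp only [hV1] at hfr
    have hfr' : u z + V1 ≤ a z := by exact_mod_cast hfr
    have h1 : ε * ‖z - x0‖ ^ 2 ≤ ε * R := mul_le_mul_of_nonneg_left (hR z hz) hε0.le
    simp [hq] at hz0
    linarith
  obtain ⟨r, hr, hrK⟩ := Metric.isOpen_iff.1 isOpen_interior z hzi
  replace hrK : ball z r ⊆ K := hrK.trans interior_subset
  obtain ⟨l, hl⟩ := aux_subgrad (ball z r) isOpen_ball u (hu z r (hrK.trans hKX)) z
    (mem_ball_self hr)
  have hsub : closedBall z (r / 2) ⊆ ball z r := closedBall_subset_ball (by linarith)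
  set c : ℝ := q z + V1 - u z + l z - ε * ‖x0‖ ^ 2 + ε * ‖z‖ ^ 2 - ε * (r / 2) ^ 2 with hc
  let b : Euc n →ᵃ[ℝ] ℝ := a - (l : Euc n →ₗ[ℝ] ℝ).toAffineMap
    - ((2 * ε) • (innerSL ℝ (z - x0)) : Euc n →L[ℝ] ℝ).toLinearMap.toAffineMap
    + AffineMap.const ℝ (Euc n) c
  have hb : ∀ x, b x = a x - l x - 2 * ε * ⟪z - x0, x⟫ + c := by
    intro x
    simp [b, inner_sub_left]
  have hid : ∀ x, b x = q z + V1 - u z - (l x - l z) + a x - ε * ‖x - x0‖ ^ 2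
      + ε * ‖x - z‖ ^ 2 - ε * (r / 2) ^ 2 := by
    intro x
    rw [hb, hc, @norm_sub_sq_real, @norm_sub_sq_real, inner_sub_left, real_inner_comm x z,
      real_inner_comm x x0]
    ring
  have hfinal := hv (closedBall z (r / 2)) (isCompact_closedBall _ _)
    (hsub.trans (hrK.trans hKX)) b ?_ z (mem_closedBall_self (by linarith))
  · rw [hV1, hid] at hfinal
    have h2 := EReal.coe_le_coe_iff.1 hfinal
    have h3 : 0 < ε * (r / 2) ^ 2 := by positivity
    simp only [hq, sub_self, norm_zero] at h2
    linarith
  · intro x hx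
    have hxs : ‖x - z‖ = r / 2 := by
      have := frontier_closedBall_subset_sphere hx
      rwa [mem_sphere, dist_eq_norm] at this
    have hxB : x ∈ ball z r := hsub (isClosed_closedBall.frontier_subset hx)
    have hxK := hrK hxB
    have h1 := hmax' x hxK
    have h2 := hl x hxB
    rw [hV1] at h1
    by_cases hbot : v x = ⊥
    · rw [hbot]; exact bot_le
    obtain ⟨V, hV⟩ : ∃ V : ℝ, v x = V :=
      ⟨(v x).toReal, (EReal.coe_toReal (hfin _ (hKX hxK)) hbot).symm⟩
    rw [hV] at h1 ⊢
    have h3 : q x + V ≤ q z + V1 := by exact_mod_cast h1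
    rw [hid, hxs, EReal.coe_le_coe_iff]
    simp only [hq] at h3 ⊢
    linarith
end
end

section
/- Let X ⊂ ℝⁿ be open and u : X → [−∞, ∞) upper semicontinuous. Then the following are equivalent: (i) every point of X has a convex open neighborhood on which u is either a finite-valued convex function or identically −∞; (ii) u + v is subaffine on X for every subaffine function v on X (with the convention −∞ + t = −∞). -/
open Set Metric Filter MeasureTheory Asymptotics
open scoped Topology BigOperators RealInnerProductSpace

noncomputable section

theorem touch_aux {n : ℕ} {X : Set (Euc n)} {w : Euc n → EReal}
    (hw : UpperSemicontinuousOn w X) (hfin : ∀ x ∈ X, w x ≠ ⊤) (h : ¬ SubaffineOn X w) :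
    ∃ x₀ ∈ X, ∃ a : Euc n →ᵃ[ℝ] ℝ, ∃ ε : ℝ, 0 < ε ∧ w x₀ = (a x₀ : EReal) ∧
      ∀ᶠ x in 𝓝 x₀, w x ≤ ((a x - ε * ‖x - x₀‖ ^ 2 : ℝ) : EReal) := by
  unfold SubaffineOn at h
  push Not at h
  obtain ⟨K, hK, hKX, a, hfr, x₁, hx₁, hlt⟩ := h
  have hb : w x₁ ≠ ⊥ := fun hb => by simp [hb] at hlt
  obtain ⟨c, hc⟩ : ∃ c : ℝ, w x₁ = c := ⟨(w x₁).toReal, (EReal.coe_toReal (hfin _ (hKX hx₁)) hb).symm⟩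
  rw [hc, EReal.coe_lt_coe_iff] at hlt
  obtain ⟨R, hR⟩ := hK.isBounded.exists_norm_le
  have hR0 : 0 ≤ R := (norm_nonneg _).trans (hR _ hx₁)
  obtain ⟨δ, hδ, hδR⟩ : ∃ δ : ℝ, 0 < δ ∧ δ * R ^ 2 < c - a x₁ := by
    refine ⟨(c - a x₁) / (R ^ 2 + 1), div_pos (by linarith) (by positivity), ?_⟩
    rw [div_mul_eq_mul_div, div_lt_iff₀ (by positivity)]
    nlinarith
  have hacont : Continuous a := a.continuous_of_finiteDimensional
  have hg : Continuous (fun x : Euc n => ((δ * ‖x‖ ^ 2 - a x : ℝ) : EReal)) :=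
    continuous_coe_real_ereal.comp (by fun_prop)
  have husc : UpperSemicontinuousOn (fun x => w x + ((δ * ‖x‖ ^ 2 - a x : ℝ) : EReal)) K := by
    refine (hw.mono hKX).add' (hg.upperSemicontinuous.upperSemicontinuousOn K) ?_
    intro x hx
    exact EReal.continuousAt_add (Or.inl (hfin _ (hKX hx))) (Or.inr (EReal.coe_ne_top _))
  obtain ⟨x₀, hx₀, hmax⟩ := husc.exists_isMaxOn ⟨x₁, hx₁⟩ hK
  have hmax' : ∀ x ∈ K, w x + ((δ * ‖x‖ ^ 2 - a x : ℝ) : EReal)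
      ≤ w x₀ + ((δ * ‖x₀‖ ^ 2 - a x₀ : ℝ) : EReal) := fun x hx => hmax hx
  have hb0 : w x₀ ≠ ⊥ := by
    intro hb0
    have := hmax' x₁ hx₁
    rw [hc, hb0, EReal.bot_add, ← EReal.coe_add] at this
    exact EReal.coe_ne_bot _ (le_bot_iff.1 this)
  obtain ⟨d, hd⟩ : ∃ d : ℝ, w x₀ = d := ⟨(w x₀).toReal, (EReal.coe_toReal (hfin _ (hKX hx₀)) hb0).symm⟩
  have hnf : x₀ ∉ frontier K := by
    intro hf
    have h1 := hfr x₀ hf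
    have h2 := hmax' x₁ hx₁
    rw [hd, EReal.coe_le_coe_iff] at h1
    rw [hd, hc, ← EReal.coe_add, ← EReal.coe_add, EReal.coe_le_coe_iff] at h2
    have h3 : ‖x₀‖ ^ 2 ≤ R ^ 2 := pow_le_pow_left₀ (norm_nonneg _) (hR _ hx₀) 2
    have h4 : 0 ≤ δ * ‖x₁‖ ^ 2 := by positivity
    nlinarith
  have hint : x₀ ∈ interior K := by
    by_contra hi
    exact hnf ⟨subset_closure hx₀, hi⟩
  refine ⟨x₀, hKX hx₀,
    a + ((-(2 * δ)) • (innerₗ (Euc n) x₀)).toAffineMap + AffineMap.const ℝ (Euc n) (d - a x₀ + 2 * δ * ‖x₀‖ ^ 2),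
    δ, hδ, ?_, ?_⟩
  · rw [hd]
    congr 1
    simp
    ring
  · filter_upwards [mem_interior_iff_mem_nhds.1 hint] with x hx
    have h2 := hmax' x hx
    by_cases hbx : w x = ⊥
    · simp [hbx]
    obtain ⟨e, he⟩ : ∃ e : ℝ, w x = e := ⟨(w x).toReal, (EReal.coe_toReal (hfin _ (hKX hx)) hbx).symm⟩
    rw [he, hd, ← EReal.coe_add, ← EReal.coe_add, EReal.coe_le_coe_iff] at h2
    rw [he, EReal.coe_le_coe_iff, norm_sub_sq_real, real_inner_comm]
    simp
    nlinarith

theorem subgrad_aux {n : ℕ} {B : Set (Euc n)} (hB : IsOpen B) {f : Euc n → ℝ}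
    (hf : ConvexOn ℝ B f) {x₀ : Euc n} (hx₀ : x₀ ∈ B) :
    ∃ b : Euc n →ᵃ[ℝ] ℝ, b x₀ = f x₀ ∧ ∀ y ∈ B, b y ≤ f y := by
  have hcont : ContinuousOn f B := hf.continuousOn hB
  have hS : IsOpen {p : Euc n × ℝ | p.1 ∈ B ∧ f p.1 < p.2} := by
    have h1 : IsOpen (Prod.fst ⁻¹' B : Set (Euc n × ℝ)) := hB.preimage continuous_fst
    have h2 : ContinuousOn (fun p : Euc n × ℝ => p.2 - f p.1) (Prod.fst ⁻¹' B) :=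
      continuous_snd.continuousOn.sub (hcont.comp continuous_fst.continuousOn (fun _ h => h))
    have h3 := h2.isOpen_inter_preimage h1 (isOpen_Ioi (a := (0:ℝ)))
    convert h3 using 1
    ext p
    simp
  obtain ⟨F, hF⟩ := geometric_hahn_banach_point_open hf.convex_strict_epigraph hS
    (x := (x₀, f x₀)) (by simp)
  have hdec : ∀ y t, F (y, t) = F (y, 0) + t * F (0, 1) := by
    intro y t
    have : ((y, t) : Euc n × ℝ) = (y, 0) + t • (0, 1) := by simp
    rw [this, map_add, map_smul, smul_eq_mul]
  have hc : 0 < F (0, 1) := by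
    have := hF (x₀, f x₀ + 1) ⟨hx₀, by simp⟩
    rw [hdec x₀ (f x₀), hdec x₀ (f x₀ + 1)] at this
    linarith
  refine ⟨AffineMap.const ℝ (Euc n) (f x₀ + F (x₀, 0) / F (0, 1)) -
    ((F (0, 1))⁻¹ • (F : Euc n × ℝ →ₗ[ℝ] ℝ).comp (LinearMap.inl ℝ (Euc n) ℝ)).toAffineMap, ?_, ?_⟩
  · simp
    ring
  · intro y hy
    have key : F (x₀, 0) + f x₀ * F (0, 1) ≤ F (y, 0) + f y * F (0, 1) := by
      refine le_of_forall_pos_le_add fun ε hε => ?_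
      have := hF (y, f y + ε / F (0, 1)) ⟨hy, by simp; positivity⟩
      rw [hdec x₀ (f x₀), hdec y] at this
      have h5 : ε / F (0, 1) * F (0, 1) = ε := div_mul_cancel₀ _ hc.ne'
      linarith
    simp
    have h6 : F (x₀, 0) / F (0, 1) - (F (0, 1))⁻¹ * F (y, 0) ≤ f y - f x₀ := by
      rw [inv_mul_eq_div, ← sub_div, div_le_iff₀ hc]
      linarith
    linarith

theorem forward_aux {n : ℕ} (X : Set (Euc n))
    (u : Euc n → EReal) (husc : UpperSemicontinuousOn u X) (hfin : ∀ x ∈ X, u x ≠ ⊤)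
    (H : ∀ x ∈ X, ∃ B, IsOpen B ∧ Convex ℝ B ∧ x ∈ B ∧ B ⊆ X ∧
        ((∃ f : Euc n → ℝ, ConvexOn ℝ B f ∧ ∀ y ∈ B, u y = (f y : EReal)) ∨
          ∀ y ∈ B, u y = ⊥)) (v : Euc n → EReal) (hv : UpperSemicontinuousOn v X)
    (hvf : ∀ x ∈ X, v x ≠ ⊤) (hvs : SubaffineOn X v) : SubaffineOn X (fun x => u x + v x) := by
  by_contra hcon
  obtain ⟨x₀, hx₀, a, ε, hε, heq, hev⟩ := touch_aux (w := fun x => u x + v x)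
    (husc.add' hv fun x hx => EReal.continuousAt_add (Or.inl (hfin x hx)) (Or.inr (hvf x hx)))
    (fun x hx => EReal.add_ne_top (hfin x hx) (hvf x hx)) hcon
  obtain ⟨B, hBo, hBc, hxB, hBX, ⟨f, hf, hfu⟩ | hbot⟩ := H x₀ hx₀
  · obtain ⟨b, hb0, hb⟩ := subgrad_aux hBo hf hxB
    obtain ⟨r, hr, hrs⟩ := Metric.nhds_basis_closedBall.mem_iff.1
      (Filter.inter_mem hev (hBo.mem_nhds hxB))
    have hle : ∀ x ∈ closedBall x₀ r, v x ≤ ((a x - b x - ε * ‖x - x₀‖ ^ 2 : ℝ) : EReal) := by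
      intro x hx
      obtain ⟨h1, h2⟩ := hrs hx
      by_cases hbx : v x = ⊥
      · simp [hbx]
      obtain ⟨e, he⟩ : ∃ e : ℝ, v x = e :=
        ⟨(v x).toReal, (EReal.coe_toReal (hvf _ (hBX h2)) hbx).symm⟩
      change u x + v x ≤ _ at h1
      rw [hfu x h2, he, ← EReal.coe_add, EReal.coe_le_coe_iff] at h1
      rw [he, EReal.coe_le_coe_iff]
      linarith [hb x h2]
    have hv0 : v x₀ = ((a x₀ - b x₀ : ℝ) : EReal) := by
      by_cases hbx : v x₀ = ⊥
      · simp [hbx] at heq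
      obtain ⟨e, he⟩ : ∃ e : ℝ, v x₀ = e :=
        ⟨(v x₀).toReal, (EReal.coe_toReal (hvf _ hx₀) hbx).symm⟩
      rw [hfu x₀ hxB, he, ← EReal.coe_add, EReal.coe_eq_coe_iff] at heq
      rw [he, EReal.coe_eq_coe_iff]
      linarith
    have := hvs (closedBall x₀ r) (isCompact_closedBall _ _) (fun x hx => hBX (hrs hx).2)
      (a - b - AffineMap.const ℝ (Euc n) (ε * r ^ 2)) (by
        intro x hx
        have hxs : x ∈ sphere x₀ r := frontier_closedBall_subset_sphere hx
        refine (hle x (sphere_subset_closedBall hxs)).trans ?_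
        rw [EReal.coe_le_coe_iff]
        rw [mem_sphere, dist_eq_norm] at hxs
        simp [hxs]) x₀ (mem_closedBall_self hr.le)
    rw [hv0, EReal.coe_le_coe_iff] at this
    simp at this
    have : 0 < ε * r ^ 2 := by positivity
    linarith
  · simp [hbot x₀ hxB] at heq

theorem seg_aux {n : ℕ} (X : Set (Euc n)) (hX : IsOpen X)
    (u : Euc n → EReal) (husc : UpperSemicontinuousOn u X) (hfin : ∀ x ∈ X, u x ≠ ⊤)
    (H : ∀ v : Euc n → EReal, UpperSemicontinuousOn v X → (∀ x ∈ X, v x ≠ ⊤) →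
        SubaffineOn X v → SubaffineOn X (fun x => u x + v x))
    (p d : Euc n) (hd : d ≠ 0) (hseg : segment ℝ p (p + d) ⊆ X) (α β : ℝ)
    (hα : u p < α) (hβ : u (p + d) < β) (t : ℝ) (ht0 : 0 ≤ t) (ht1 : t ≤ 1) :
    u (p + t • d) ≤ (((1 - t) * α + t * β : ℝ) : EReal) := by
  have hdn : 0 < ‖d‖ ^ 2 := by positivity
  obtain ⟨s, hs⟩ : ∃ s : Euc n →ᵃ[ℝ] ℝ, ∀ x τ, s (p + x + τ • d) = inner ℝ d x / ‖d‖ ^ 2 + τ := by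
    refine ⟨((‖d‖ ^ 2)⁻¹ • innerₗ (Euc n) d).toAffineMap -
      AffineMap.const ℝ (Euc n) (inner ℝ d p / ‖d‖ ^ 2), fun x τ => ?_⟩
    simp [inner_add_right, inner_smul_right, real_inner_self_eq_norm_sq]
    field_simp
    ring
  have hstr : ∀ x τ, s (x + τ • d) = s x + τ := by
    intro x τ
    have h1 := hs (x - p) τ
    have h2 := hs (x - p) 0
    simp at h1 h2
    rw [h1, h2]
  have hsp : s p = 0 := by simpa using hs 0 0
  have hscont : Continuous s := s.continuous_of_finiteDimensional
  set ρ : Euc n → ℝ := fun x => ‖x - (p + s x • d)‖ with hρ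
  have hρc : Continuous ρ := by fun_prop
  have hρtr : ∀ (x : Euc n) (τ : ℝ), ρ (x + τ • d) = ρ x := by
    intro x τ
    simp only [hρ, hstr]
    congr 1
    module
  have hρp : ∀ τ : ℝ, ρ (p + τ • d) = 0 := by
    intro τ
    rw [hρtr]
    simp [hρ, hsp]
  -- test functions
  have hvs : ∀ C : ℝ, SubaffineOn X (fun x => ((-(C * ρ x ^ 2) : ℝ) : EReal)) := by
    intro C
    by_contra hcon
    obtain ⟨x₀, hx₀, a, ε, hε, heq, hev⟩ := touch_aux
      ((continuous_coe_real_ereal.comp (f := fun x => (-(C * ρ x ^ 2) : ℝ)) (by fun_prop)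
        ).upperSemicontinuous.upperSemicontinuousOn X) (fun x _ => EReal.coe_ne_top _) hcon
    have hl : ∀ σ : ℝ, ∀ᶠ τ in 𝓝 (0:ℝ), ((-(C * ρ (x₀ + (σ * τ) • d) ^ 2) : ℝ) : EReal) ≤
        ((a (x₀ + (σ * τ) • d) - ε * ‖x₀ + (σ * τ) • d - x₀‖ ^ 2 : ℝ) : EReal) := by
      intro σ
      have : Tendsto (fun τ : ℝ => x₀ + (σ * τ) • d) (𝓝 0) (𝓝 x₀) := by
        have : Continuous (fun τ : ℝ => x₀ + (σ * τ) • d) := by fun_prop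
        simpa using this.tendsto 0
      exact this.eventually hev
    have h3 : ∀ᶠ τ in 𝓝[>] (0:ℝ), _ :=
      ((hl 1).and (hl (-1))).filter_mono nhdsWithin_le_nhds
    obtain ⟨τ, ⟨h4, h5⟩, hτ⟩ := (h3.and self_mem_nhdsWithin).exists
    rw [EReal.coe_le_coe_iff] at h4 h5
    rw [Function.comp_apply, EReal.coe_eq_coe_iff] at heq
    have hτ' : (0:ℝ) < τ := hτ
    have ha : ∀ σ : ℝ, a (x₀ + σ • d) = a x₀ + σ * a.linear d := by
      intro σ
      have := a.map_vadd x₀ (σ • d)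
      rw [vadd_eq_add, vadd_eq_add, add_comm] at this
      rw [this]; simp; ring
    rw [hρtr, ha, add_sub_cancel_left, norm_smul] at h4 h5
    have h6 : 0 < ε * (τ ^ 2 * ‖d‖ ^ 2) := by positivity
    simp [abs_of_pos hτ', mul_pow] at h4 h5
    linarith
  -- small radius
  have hpX : p ∈ X := hseg (left_mem_segment _ _ _)
  have hqX : p + d ∈ X := hseg (right_mem_segment _ _ _)
  have hnb : ∀ y ∈ X, ∀ γ : EReal, u y < γ → ∀ᶠ x in 𝓝 y, u x < γ := by
    intro y hy γ hγ
    have := husc y hy γ hγ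
    rwa [hX.nhdsWithin_eq hy] at this
  have hsegc : IsCompact (segment ℝ p (p + d)) := by
    rw [segment_eq_image_lineMap]
    exact isCompact_Icc.image AffineMap.lineMap_continuous
  obtain ⟨r₀, hr₀, hr₀X⟩ := hsegc.exists_cthickening_subset_open hX hseg
  obtain ⟨r₁, hr₁, hr₁p⟩ := Metric.nhds_basis_closedBall.mem_iff.1 (hnb p hpX _ hα)
  obtain ⟨r₂, hr₂, hr₂p⟩ := Metric.nhds_basis_closedBall.mem_iff.1 (hnb _ hqX _ hβ)
  set r := min r₀ (min r₁ r₂) with hr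
  have hrpos : 0 < r := by positivity
  have hrr0 : r ≤ r₀ := min_le_left _ _
  have hrr1 : r ≤ r₁ := (min_le_right _ _).trans (min_le_left _ _)
  have hrr2 : r ≤ r₂ := (min_le_right _ _).trans (min_le_right _ _)
  set K : Set (Euc n) := {x | 0 ≤ s x ∧ s x ≤ 1 ∧ ρ x ≤ r} with hKdef
  have hKth : K ⊆ cthickening r₀ (segment ℝ p (p + d)) := by
    rintro x ⟨h0, h1, h2⟩
    refine mem_cthickening_of_dist_le x (p + s x • d) _ _ ?_ ?_
    · rw [segment_eq_image']
      exact ⟨s x, ⟨h0, h1⟩, by simp⟩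
    · rw [dist_eq_norm]; exact h2.trans hrr0
  have hKX : K ⊆ X := hKth.trans hr₀X
  have hKcl : IsClosed K :=
    (isClosed_le continuous_const hscont).inter
      ((isClosed_le hscont continuous_const).inter (isClosed_le hρc continuous_const))
  have hKc : IsCompact K := hsegc.cthickening.of_isClosed_subset hKcl hKth
  have hmK : p + t • d ∈ K := by
    refine ⟨?_, ?_, ?_⟩
    · rw [hstr, hsp]; linarith
    · rw [hstr, hsp]; linarith
    · rw [hρp]; exact hrpos.le
  obtain ⟨M, hM⟩ : ∃ M : ℝ, ∀ x ∈ K, u x ≤ M := by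
    obtain ⟨y, hy, hmax⟩ := (husc.mono hKX).exists_isMaxOn ⟨_, hmK⟩ hKc
    obtain ⟨M, hM, -⟩ := EReal.lt_iff_exists_real_btwn.1 (lt_top_iff_ne_top.2 (hfin y (hKX hy)))
    exact ⟨M, fun x hx => (hmax hx).trans hM.le⟩
  set m := min α β with hm
  obtain ⟨C, hC0, hC⟩ : ∃ C : ℝ, 0 ≤ C ∧ M - C * r ^ 2 ≤ m := by
    refine ⟨max 0 ((M - m) / r ^ 2), le_max_left _ _, ?_⟩
    have h1 : (M - m) / r ^ 2 ≤ max 0 ((M - m) / r ^ 2) := le_max_right _ _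
    rw [div_le_iff₀ (by positivity)] at h1
    linarith
  have hmα : m ≤ α := min_le_left _ _
  have hmβ : m ≤ β := min_le_right _ _
  have hfinal := H (fun x => ((-(C * ρ x ^ 2) : ℝ) : EReal))
    ((continuous_coe_real_ereal.comp (f := fun x => (-(C * ρ x ^ 2) : ℝ)) (by fun_prop)
        ).upperSemicontinuous.upperSemicontinuousOn X) (fun x _ => EReal.coe_ne_top _) (hvs C)
    K hKc hKX (AffineMap.const ℝ (Euc n) α + (β - α) • s) (by
      intro x hx
      have hxK : x ∈ K := hKcl.frontier_subset hx
      have hcase : s x = 0 ∨ s x = 1 ∨ ρ x = r := by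
        by_contra hcon
        push Not at hcon
        obtain ⟨h0, h1, h2⟩ := hxK
        apply hx.2
        have hU : IsOpen {x | 0 < s x ∧ s x < 1 ∧ ρ x < r} :=
          (isOpen_lt continuous_const hscont).inter
            ((isOpen_lt hscont continuous_const).inter (isOpen_lt hρc continuous_const))
        have hUK : {x | 0 < s x ∧ s x < 1 ∧ ρ x < r} ⊆ K :=
          fun y hy => ⟨hy.1.le, hy.2.1.le, hy.2.2.le⟩
        exact interior_maximal hUK hU
          ⟨lt_of_le_of_ne h0 (Ne.symm hcon.1), lt_of_le_of_ne h1 hcon.2.1,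
            lt_of_le_of_ne h2 hcon.2.2⟩
      have hbd : ∃ γ : ℝ, u x ≤ γ ∧ γ - C * ρ x ^ 2 ≤ α + (β - α) * s x := by
        have hCρ : 0 ≤ C * ρ x ^ 2 := by positivity
        rcases hcase with h | h | h
        · refine ⟨α, ?_, ?_⟩
          · have : x ∈ closedBall p r₁ := by
              rw [mem_closedBall, dist_eq_norm]
              have := hxK.2.2
              simp [hρ, h] at this
              exact this.trans hrr1
            exact (hr₁p this).le
          · rw [h]; linarith
        · refine ⟨β, ?_, ?_⟩
          · have : x ∈ closedBall (p + d) r₂ := by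
              rw [mem_closedBall, dist_eq_norm]
              have := hxK.2.2
              simp only [hρ, h, one_smul] at this
              exact this.trans hrr2
            exact (hr₂p this).le
          · rw [h]; linarith
        · refine ⟨M, hM x hxK, ?_⟩
          rw [h]
          have := hxK.1
          have := hxK.2.1
          nlinarith
      obtain ⟨γ, hγ, hγ'⟩ := hbd
      calc u x + ((-(C * ρ x ^ 2) : ℝ) : EReal) ≤ (γ : EReal) + ((-(C * ρ x ^ 2) : ℝ) : EReal) :=
            add_le_add_left hγ _
        _ = ((γ - C * ρ x ^ 2 : ℝ) : EReal) := by rw [← EReal.coe_add, sub_eq_add_neg]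
        _ ≤ _ := by
            rw [EReal.coe_le_coe_iff]
            simpa using hγ') _ hmK
  simp only [hρp] at hfinal
  have e1 : ((-(C * 0 ^ 2) : ℝ) : EReal) = 0 := by simp
  rw [e1, add_zero] at hfinal
  refine hfinal.trans (le_of_eq ?_)
  congr 1
  simp [hstr, hsp]
  ring

theorem backward_aux {n : ℕ} (X : Set (Euc n)) (hX : IsOpen X)
    (u : Euc n → EReal) (husc : UpperSemicontinuousOn u X) (hfin : ∀ x ∈ X, u x ≠ ⊤)
    (H : ∀ v : Euc n → EReal, UpperSemicontinuousOn v X → (∀ x ∈ X, v x ≠ ⊤) →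
        SubaffineOn X v → SubaffineOn X (fun x => u x + v x)) :
    ∀ x ∈ X, ∃ B, IsOpen B ∧ Convex ℝ B ∧ x ∈ B ∧ B ⊆ X ∧
        ((∃ f : Euc n → ℝ, ConvexOn ℝ B f ∧ ∀ y ∈ B, u y = (f y : EReal)) ∨
          ∀ y ∈ B, u y = ⊥) := by
  intro x hx
  obtain ⟨r, hr, hrX⟩ := Metric.isOpen_iff.1 hX x hx
  refine ⟨ball x r, isOpen_ball, convex_ball x r, mem_ball_self hr, hrX, ?_⟩
  have key : ∀ p ∈ ball x r, ∀ q ∈ ball x r, p ≠ q → ∀ α β : ℝ, u p < α → u q < β →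
      ∀ t : ℝ, 0 ≤ t → t ≤ 1 → u (p + t • (q - p)) ≤ (((1 - t) * α + t * β : ℝ) : EReal) := by
    intro p hp q hq hpq α β hα hβ t h0 h1
    refine seg_aux X hX u husc hfin H p (q - p) (sub_ne_zero.2 hpq.symm) ?_ α β hα ?_ t h0 h1
    · rw [add_sub_cancel]
      exact ((convex_ball x r).segment_subset hp hq).trans hrX
    · rwa [add_sub_cancel]
  by_cases hbot : ∃ p ∈ ball x r, u p = ⊥
  · right
    obtain ⟨p, hp, hpb⟩ := hbot
    intro y hy
    by_cases hyp : y = p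
    · rw [hyp, hpb]
    -- extend slightly beyond `y`
    have hcont : Continuous (fun τ : ℝ => y + τ • (y - p)) := by fun_prop
    have hev : ∀ᶠ τ in 𝓝[>] (0:ℝ), y + τ • (y - p) ∈ ball x r := by
      refine Filter.Eventually.filter_mono nhdsWithin_le_nhds ?_
      have ht := hcont.tendsto 0
      simp only [zero_smul, add_zero] at ht
      exact ht.eventually (isOpen_ball.mem_nhds hy)
    obtain ⟨τ, hq, hτ⟩ := (hev.and self_mem_nhdsWithin).exists
    have hτ' : (0:ℝ) < τ := hτ
    set q := y + τ • (y - p) with hqdef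
    have hqp : q - p = (1 + τ) • (y - p) := by rw [hqdef]; module
    have hpq : p ≠ q := by
      intro h
      have : q - p = 0 := by rw [h]; simp
      rw [hqp, smul_eq_zero] at this
      rcases this with h1 | h1
      · linarith
      · exact hyp (sub_eq_zero.1 h1)
    obtain ⟨β, hβ, -⟩ := EReal.lt_iff_exists_real_btwn.1 (lt_top_iff_ne_top.2 (hfin q (hrX hq)))
    rw [EReal.eq_bot_iff_forall_lt]
    intro c
    set t := (1 + τ)⁻¹ with htdef
    have ht1 : t < 1 := inv_lt_one_of_one_lt₀ (by linarith)
    have ht0 : 0 ≤ t := by positivity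
    have hy' : p + t • (q - p) = y := by
      rw [hqp, smul_smul, htdef, inv_mul_cancel₀ (by positivity)]; module
    have h := key p hp q hq hpq ((c - 1 - t * β) / (1 - t)) β (by rw [hpb]; exact EReal.bot_lt_coe _)
      hβ t ht0 ht1.le
    rw [hy', mul_div_cancel₀ _ (by linarith)] at h
    refine h.trans_lt ?_
    rw [EReal.coe_lt_coe_iff]
    linarith
  · left
    push Not at hbot
    have hval : ∀ y ∈ ball x r, u y = ((u y).toReal : EReal) := fun y hy =>
      (EReal.coe_toReal (hfin y (hrX hy)) (hbot y hy)).symm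
    refine ⟨fun y => (u y).toReal, ⟨convex_ball x r, ?_⟩, hval⟩
    intro p hp q hq a b ha hb hab
    by_cases hpq : p = q
    · subst hpq
      rw [← add_smul, ← add_smul, hab, one_smul, one_smul]
    have hpt : a • p + b • q = p + b • (q - p) := by
      rw [show a = 1 - b by linarith]; module
    have hmem : a • p + b • q ∈ ball x r := convex_ball x r hp hq ha hb hab
    refine le_of_forall_pos_le_add fun ε hε => ?_
    have h := key p hp q hq hpq ((u p).toReal + ε) ((u q).toReal + ε)
      (by conv_lhs => rw [hval p hp]
          rw [EReal.coe_lt_coe_iff]; linarith)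
      (by conv_lhs => rw [hval q hq]
          rw [EReal.coe_lt_coe_iff]; linarith) b hb (by linarith)
    rw [← hpt, hval _ hmem, EReal.coe_le_coe_iff] at h
    simp only [smul_eq_mul]
    rw [show a = 1 - b by linarith] at h ⊢
    linarith

/-- Proposition 2.6: `u` is locally convex-or-`−∞` on `X` iff
`u + v` is subaffine on `X` for every subaffine function `v` on `X`. -/
theorem locally_convex_iff_add_subaffine {n : ℕ} (X : Set (Euc n)) (hX : IsOpen X)
    (u : Euc n → EReal) (husc : UpperSemicontinuousOn u X) (hfin : ∀ x ∈ X, u x ≠ ⊤) :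
    (∀ x ∈ X, ∃ B, IsOpen B ∧ Convex ℝ B ∧ x ∈ B ∧ B ⊆ X ∧
        ((∃ f : Euc n → ℝ, ConvexOn ℝ B f ∧ ∀ y ∈ B, u y = (f y : EReal)) ∨
          ∀ y ∈ B, u y = ⊥)) ↔
      (∀ v : Euc n → EReal, UpperSemicontinuousOn v X → (∀ x ∈ X, v x ≠ ⊤) →
        SubaffineOn X v → SubaffineOn X (fun x => u x + v x)) := by
  exact ⟨fun H v hv hvf hvs => forward_aux X u husc hfin H v hv hvf hvs,
    backward_aux X hX u husc hfin⟩
end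
end

section
/- Let F ⊂ Sym²(ℝⁿ) be a Dirichlet set with Dirichlet dual F̃. Then: (1) a matrix A ∈ Sym²(ℝⁿ) belongs to F if and only if A + B ∈ P̃ for every B ∈ F̃; and (2) a C² function u on an open set X ⊂ ℝⁿ satisfies Hess_x u ∈ F for all x ∈ X if and only if u + v is subaffine on X for every C² function v on X satisfying Hess_x v ∈ F̃ for all x ∈ X. -/
open Set Metric Filter MeasureTheory Asymptotics
open scoped Topology BigOperators RealInnerProductSpace

noncomputable section

lemma quad_hasFDerivAt {n : ℕ} (L : Euc n →L[ℝ] Euc n →L[ℝ] ℝ) (hL : ∀ x y, L x y = L y x)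
    (h : Euc n) : HasFDerivAt (fun x => (1/2 : ℝ) * L x x) (L h) h := by
  have h1 : HasFDerivAt (fun x => L x x) _ h :=
    (L.hasFDerivAt (x := h)).clm_apply (hasFDerivAt_id h)
  have h2 := h1.const_mul (1/2 : ℝ)
  refine h2.congr_fderiv ?_
  ext k
  simp [hL k h]
  ring

lemma bilin_of_clm {n : ℕ} (L : Euc n →L[ℝ] Euc n →L[ℝ] ℝ) (x y : Euc n) :
    bilin (fun i j => L (EuclideanSpace.single i 1) (EuclideanSpace.single j 1)) x y = L x y := by
  have hx : ∀ x : Euc n, x = ∑ i, x i • EuclideanSpace.single i (1:ℝ) := by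
    intro x
    ext j
    simp [Finset.sum_apply, Pi.single_apply]
  conv_rhs => rw [hx x, hx y]
  simp only [bilin, map_sum, map_smul, ContinuousLinearMap.sum_apply,
    ContinuousLinearMap.smul_apply, smul_eq_mul, Finset.mul_sum]
  rw [Finset.sum_comm]
  refine Finset.sum_congr rfl fun i _ => Finset.sum_congr rfl fun j _ => ?_
  ring

lemma hessMat_eq {n : ℕ} (f : Euc n → ℝ) (x : Euc n) :
    hessMat f x = fun i j => fderiv ℝ (fderiv ℝ f) x (EuclideanSpace.single i 1)
      (EuclideanSpace.single j 1) := by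
  ext i j
  simp [hessMat, iteratedFDeriv_two_apply]

lemma symm_snd {n : ℕ} {f : Euc n → ℝ} {x : Euc n} (hf : ContDiffAt ℝ 2 f x) (a b : Euc n) :
    fderiv ℝ (fderiv ℝ f) x a b = fderiv ℝ (fderiv ℝ f) x b a :=
  (hf.isSymmSndFDerivAt (by simp)).eq a b

lemma taylor_two {n : ℕ} {f : Euc n → ℝ} {x : Euc n} (hf : ContDiffAt ℝ 2 f x)
    {δ : ℝ} (hδ : 0 < δ) :
    ∀ᶠ h in 𝓝 (0 : Euc n),
      |f (x + h) - f x - fderiv ℝ f x h - 1/2 * bilin (hessMat f x) h h| ≤ δ * ‖h‖ ^ 2 := by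
  set L := fderiv ℝ (fderiv ℝ f) x with hLdef
  have hsym : ∀ a b, L a b = L b a := symm_snd hf
  have hb : ∀ h, bilin (hessMat f x) h h = L h h := by
    intro h
    rw [hessMat_eq]
    exact bilin_of_clm L h h
  have hd : DifferentiableAt ℝ (fderiv ℝ f) x :=
    (hf.fderiv_right (m := 1) (by norm_num)).differentiableAt (by norm_num)
  have hL : HasFDerivAt (fderiv ℝ f) L x := hd.hasFDerivAt
  have hev1 : ∀ᶠ y in 𝓝 x, DifferentiableAt ℝ f y := by
    have := hf.eventually (by simp)
    filter_upwards [this] with y hy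
    exact hy.differentiableAt (by norm_num)
  have ht : Tendsto (fun h : Euc n => x + h) (𝓝 0) (𝓝 x) := by
    have : Continuous (fun h : Euc n => x + h) := by fun_prop
    simpa using this.tendsto 0
  have hev1' := ht.eventually hev1
  have hev2 : ∀ᶠ h in 𝓝 (0 : Euc n), ‖fderiv ℝ f (x + h) - fderiv ℝ f x - L h‖ ≤ δ * ‖h‖ :=
    (hasFDerivAt_iff_isLittleO_nhds_zero.mp hL).def hδ
  obtain ⟨r, hr, hball⟩ := Metric.eventually_nhds_iff_ball.mp (hev1'.and hev2)
  filter_upwards [Metric.ball_mem_nhds (0 : Euc n) hr] with h hh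
  rw [mem_ball_zero_iff] at hh
  have hg : ∀ k ∈ closedBall (0 : Euc n) ‖h‖,
      HasFDerivWithinAt (fun k => f (x + k) - fderiv ℝ f x k - 1/2 * L k k)
        (fderiv ℝ f (x + k) - fderiv ℝ f x - L k) (closedBall (0 : Euc n) ‖h‖) k := by
    intro k hk
    rw [mem_closedBall_zero_iff] at hk
    have hk' := (hball k (by rw [mem_ball_zero_iff]; linarith)).1
    have h1 : HasFDerivAt (fun k => f (x + k)) (fderiv ℝ f (x + k)) k := by
      have := hk'.hasFDerivAt.comp k ((hasFDerivAt_id k).const_add x)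
      have h2 : (fderiv ℝ f (x + k)).comp (ContinuousLinearMap.id ℝ (Euc n))
          = fderiv ℝ f (x + k) := by ext; rfl
      exact this.congr_fderiv h2
    exact ((h1.sub (fderiv ℝ f x).hasFDerivAt).sub (quad_hasFDerivAt L hsym k)).hasFDerivWithinAt
  have := Convex.norm_image_sub_le_of_norm_hasFDerivWithin_le (C := δ * ‖h‖) hg
    (fun k hk => by
      rw [mem_closedBall_zero_iff] at hk
      refine ((hball k (by rw [mem_ball_zero_iff]; linarith)).2).trans ?_
      gcongr) (convex_closedBall _ _)
    (mem_closedBall_self (norm_nonneg h)) (mem_closedBall_zero_iff.mpr le_rfl)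
  rw [hb]
  simp only [Real.norm_eq_abs, add_zero, map_zero, sub_zero, mul_zero] at this
  calc _ = _ := by congr 1; ring
    _ ≤ _ := this
    _ = _ := by ring

lemma bilin_eq {n : ℕ} (M : Matrix (Fin n) (Fin n) ℝ) (x : Euc n) :
    bilin M x x = star (x.ofLp) ⬝ᵥ (M.mulVec x.ofLp) := by
  simp only [bilin, dotProduct, Matrix.mulVec, Finset.mul_sum, star_trivial]
  refine Finset.sum_congr rfl fun i _ => Finset.sum_congr rfl fun j _ => ?_
  ring

lemma posDef_iff_bilin {n : ℕ} (M : Matrix (Fin n) (Fin n) ℝ) :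
    M.PosDef ↔ M.IsHermitian ∧ ∀ x : Euc n, x ≠ 0 → 0 < bilin M x x := by
  rw [Matrix.posDef_iff_dotProduct_mulVec]
  refine and_congr_right fun _ => ⟨fun h x hx => ?_, fun h x hx => ?_⟩
  · rw [bilin_eq]
    exact h (fun h0 => hx (by ext i; simp [h0]))
  · have := h (WithLp.toLp 2 x) (fun h0 => hx (by simpa using h0))
    rwa [bilin_eq] at this

lemma bilin_add_mat {n : ℕ} (M N : Matrix (Fin n) (Fin n) ℝ) (x : Euc n) :
    bilin (M + N) x x = bilin M x x + bilin N x x := by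
  simp [bilin, add_mul, Finset.sum_add_distrib]

lemma bilin_neg_mat {n : ℕ} (M : Matrix (Fin n) (Fin n) ℝ) (x : Euc n) :
    bilin (-M) x x = - bilin M x x := by
  simp [bilin]

lemma bilin_smul_one {n : ℕ} (c : ℝ) (x : Euc n) :
    bilin (c • (1 : Matrix (Fin n) (Fin n) ℝ)) x x = c * ‖x‖ ^ 2 := by
  rw [EuclideanSpace.norm_sq_eq]
  simp [bilin, Matrix.one_apply, Finset.mul_sum]
  refine Finset.sum_congr rfl fun i _ => ?_
  ring

lemma bilin_smul_vec {n : ℕ} (M : Matrix (Fin n) (Fin n) ℝ) (c : ℝ) (x : Euc n) :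
    bilin M (c • x) (c • x) = c ^ 2 * bilin M x x := by
  simp only [bilin, Finset.mul_sum, PiLp.smul_apply, smul_eq_mul]
  refine Finset.sum_congr rfl fun i _ => Finset.sum_congr rfl fun j _ => ?_
  ring

lemma sym_herm {n : ℕ} (A : SymMat n) : (A : Matrix (Fin n) (Fin n) ℝ).IsHermitian :=
  selfAdjoint.mem_iff.mp A.2

lemma eventually_posDef {n : ℕ} (P : SymMat n) (hP : (P : Matrix (Fin n) (Fin n) ℝ).PosDef) :
    ∀ᶠ Q : SymMat n in 𝓝 P, (Q : Matrix (Fin n) (Fin n) ℝ).PosDef := by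
  have hc : Continuous fun z : SymMat n × Euc n =>
      bilin (z.1 : Matrix (Fin n) (Fin n) ℝ) z.2 z.2 := by
    unfold bilin
    refine continuous_finsetSum _ fun i _ => continuous_finsetSum _ fun j _ => ?_
    have h1 : Continuous fun z : SymMat n × Euc n => (z.1 : Matrix (Fin n) (Fin n) ℝ) i j :=
      (continuous_subtype_val.comp continuous_fst).matrix_elem i j
    have h2 : ∀ i, Continuous fun z : SymMat n × Euc n => z.2 i := fun i =>
      (EuclideanSpace.proj (𝕜 := ℝ) i).continuous.comp continuous_snd
    exact (h1.mul (h2 i)).mul (h2 j)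
  have := (isCompact_sphere (0 : Euc n) 1).eventually_forall_of_forall_eventually (x₀ := P)
    (P := fun Q x => 0 < bilin (Q : Matrix (Fin n) (Fin n) ℝ) x x) (fun y hy => by
      refine hc.continuousAt.eventually (lt_mem_nhds ?_)
      refine ((posDef_iff_bilin _).mp hP).2 y ?_
      rintro rfl
      simp at hy)
  filter_upwards [this] with Q hQ
  refine (posDef_iff_bilin _).mpr ⟨sym_herm Q, fun x hx => ?_⟩
  have hx' : 0 < ‖x‖ := norm_pos_iff.mpr hx
  have := hQ (‖x‖⁻¹ • x) (by simp [norm_smul, hx'.ne'])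
  rw [bilin_smul_vec] at this
  exact pos_of_mul_pos_right this (by positivity)

lemma part_one_fwd {n : ℕ} {F : Set (SymMat n)} (hF : IsDirichletSet F) {A B : SymMat n}
    (hA : A ∈ F) (hB : B ∈ dirDual F) : NotNegDef (A + B) := by
  intro hneg
  apply hB
  rw [mem_interior_iff_mem_nhds]
  have h1 := eventually_posDef (-(A + B)) hneg
  have h2 : Tendsto (fun Q : SymMat n => Q - A) (𝓝 (-B)) (𝓝 (-(A + B))) := by
    have : Continuous fun Q : SymMat n => Q - A := by fun_prop
    convert this.tendsto (-B) using 2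
    abel
  filter_upwards [h2.eventually h1] with Q hQ
  have := hF.add_psd A hA (Q - A) hQ.posSemidef
  simpa using this

lemma exists_eps {n : ℕ} {F : Set (SymMat n)} (hF : IsDirichletSet F) {A : SymMat n}
    (hA : A ∉ F) : ∃ ε : ℝ, 0 < ε ∧ -(A + ε • symOne n) ∈ dirDual F := by
  have h1 : ∀ᶠ Q in 𝓝 A, Q ∉ F := hF.isClosed.isOpen_compl.mem_nhds hA
  have h2 : Tendsto (fun ε : ℝ => A + ε • symOne n) (𝓝 0) (𝓝 A) := by
    have : Continuous fun ε : ℝ => A + ε • symOne n := by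
      refine continuous_induced_rng.mpr ?_
      show Continuous fun ε : ℝ => (A : Matrix (Fin n) (Fin n) ℝ) + ε • (symOne n : Matrix (Fin n) (Fin n) ℝ)
      fun_prop
    simpa using this.tendsto 0
  have h3 := (h2.eventually h1).filter_mono (nhdsWithin_le_nhds (s := Ioi 0))
  obtain ⟨ε, h, hε⟩ := (h3.and self_mem_nhdsWithin).exists
  refine ⟨ε, hε, ?_⟩
  show - -_ ∉ _
  rw [neg_neg]
  exact fun hh => h (interior_subset hh)

lemma part_one_bwd {n : ℕ} {F : Set (SymMat n)} (hF : IsDirichletSet F) {A : SymMat n}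
    (h : ∀ B ∈ dirDual F, NotNegDef (A + B)) : A ∈ F := by
  by_contra hA
  obtain ⟨ε, hε, hB⟩ := exists_eps hF hA
  apply h _ hB
  have : -((A + -(A + ε • symOne n) : SymMat n) : Matrix (Fin n) (Fin n) ℝ)
      = ε • (1 : Matrix (Fin n) (Fin n) ℝ) := by
    simp [symOne]
  rw [this, posDef_iff_bilin]
  refine ⟨by simp [Matrix.IsHermitian], fun x hx => ?_⟩
  rw [bilin_smul_one]
  have := norm_pos_iff.mpr hx
  positivity

lemma hessMat_add {n : ℕ} {u v : Euc n → ℝ} {x : Euc n} (hu : ContDiffAt ℝ 2 u x)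
    (hv : ContDiffAt ℝ 2 v x) :
    hessMat (fun x => u x + v x) x = hessMat u x + hessMat v x := by
  have := iteratedFDeriv_add_apply (i := 2) (by exact_mod_cast hu) (by exact_mod_cast hv)
  ext i j
  exact congrArg (fun T => T ![EuclideanSpace.single i 1, EuclideanSpace.single j 1]) this

lemma exists_quad {n : ℕ} (B : SymMat n) : ∃ v : Euc n → ℝ, ContDiff ℝ 2 v ∧
    ∀ x, hessMat v x = B := by
  let T := Matrix.toEuclideanCLM (n := Fin n) (𝕜 := ℝ) (B : Matrix (Fin n) (Fin n) ℝ)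
  let L : Euc n →L[ℝ] Euc n →L[ℝ] ℝ := (innerSL ℝ).comp T
  have hB : ∀ i j, (B : Matrix (Fin n) (Fin n) ℝ) i j = (B : Matrix (Fin n) (Fin n) ℝ) j i := by
    intro i j
    simpa using ((sym_herm B).apply i j).symm
  have hent : ∀ i j, L (EuclideanSpace.single i 1) (EuclideanSpace.single j 1)
      = (B : Matrix (Fin n) (Fin n) ℝ) i j := by
    intro i j
    rw [hB]
    simp [L, T, EuclideanSpace.inner_single_right, Matrix.ofLp_toEuclideanCLM]
  have hsym : ∀ x y, L x y = L y x := by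
    intro x y
    rw [← bilin_of_clm, ← bilin_of_clm]
    simp only [hent, bilin]
    rw [Finset.sum_comm]
    refine Finset.sum_congr rfl fun i _ => Finset.sum_congr rfl fun j _ => ?_
    rw [hB]; ring
  refine ⟨fun x => 1/2 * L x x, by fun_prop, fun x => ?_⟩
  have : fderiv ℝ (fun x => 1/2 * L x x) = fun x => L x := by
    ext1 x
    exact (quad_hasFDerivAt L hsym x).fderiv
  rw [hessMat_eq, this]
  ext i j
  rw [← hent i j]
  congr 2
  exact L.hasFDerivAt.fderiv

lemma hess_herm {n : ℕ} {f : Euc n → ℝ} {x : Euc n} (hf : ContDiffAt ℝ 2 f x) :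
    hessMat f x ∈ selfAdjoint (Matrix (Fin n) (Fin n) ℝ) := by
  rw [selfAdjoint.mem_iff]
  ext i j
  rw [hessMat_eq]
  exact symm_snd hf _ _

lemma subaffine_of {n : ℕ} {X : Set (Euc n)} (hX : IsOpen X) {w : Euc n → ℝ}
    (hw : ContDiffOn ℝ 2 w X)
    (hneg : ∀ x ∈ X, ¬ (-(hessMat w x)).PosDef) :
    SubaffineOn X (fun x => (w x : EReal)) := by
  intro K hK hKX a ha x₀ hx₀
  simp only [EReal.coe_le_coe_iff] at ha ⊢
  by_contra! hlt
  have hac : Continuous a := a.continuous_of_finiteDimensional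
  obtain ⟨C, hC⟩ := hK.isBounded.exists_norm_le
  obtain ⟨ε, hε, hεC⟩ : ∃ ε : ℝ, 0 < ε ∧ ε * C ^ 2 < w x₀ - a x₀ := by
    refine ⟨(w x₀ - a x₀) / (2 * (C ^ 2 + 1)), by have := sub_pos.mpr hlt; positivity, ?_⟩
    have := sub_pos.mpr hlt
    rw [div_mul_eq_mul_div, div_lt_iff₀ (by positivity)]
    nlinarith [sq_nonneg C]
  have hcont : ContinuousOn (fun x => w x - a x + ε * ‖x‖ ^ 2) K := by
    have := hw.continuousOn.mono hKX
    fun_prop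
  obtain ⟨y, hyK, hmax⟩ := hK.exists_isMaxOn ⟨x₀, hx₀⟩ hcont
  have hy0 := hmax hx₀
  simp only [mem_ofPred_eq] at hy0
  have hyint : y ∈ interior K := by
    by_contra hni
    have hfr : y ∈ frontier K := ⟨subset_closure hyK, hni⟩
    have h1 := ha y hfr
    have h2 : ‖y‖ ^ 2 ≤ C ^ 2 := by
      have := hC y hyK
      gcongr
    have h3 : ε * ‖y‖ ^ 2 ≤ ε * C ^ 2 := by gcongr
    have h4 : 0 ≤ ε * ‖x₀‖ ^ 2 := by positivity
    linarith
  have hyX := hKX hyK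
  have hwy : ContDiffAt ℝ 2 w y := hw.contDiffAt (hX.mem_nhds hyX)
  apply hneg y hyX
  rw [posDef_iff_bilin]
  refine ⟨(show IsSelfAdjoint (-(hessMat w y)) from (neg_mem (hess_herm hwy))), fun h hh => ?_⟩
  rw [bilin_neg_mat]
  have ht := taylor_two hwy (δ := ε / 2) (by positivity)
  have hKn : ∀ᶠ k in 𝓝 (0 : Euc n), y + k ∈ K := by
    have hc : Continuous fun k : Euc n => y + k := by fun_prop
    have := hc.tendsto 0
    rw [add_zero] at this
    exact this (mem_interior_iff_mem_nhds.mp hyint)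
  have hboth := ht.and hKn
  have hp : Tendsto (fun t : ℝ => t • h) (𝓝[>] 0) (𝓝 0) := by
    have hc : Continuous fun t : ℝ => t • h := by fun_prop
    have := hc.tendsto 0
    rw [zero_smul] at this
    exact this.mono_left nhdsWithin_le_nhds
  have hm : Tendsto (fun t : ℝ => -(t • h)) (𝓝[>] 0) (𝓝 0) := by
    simpa using hp.neg
  obtain ⟨t, ⟨⟨hp1, hp2⟩, ⟨hm1, hm2⟩⟩, ht0⟩ :=
    (((hp.eventually hboth).and (hm.eventually hboth)).and self_mem_nhdsWithin).exists
  have ht0 : 0 < t := ht0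
  have e1 := hmax hp2
  have e2 := hmax hm2
  simp only [mem_ofPred_eq] at e1 e2
  have ea : ∀ k, a (y + k) = a.linear k + a y := fun k => by
    have := a.map_vadd y k
    simpa [add_comm] using this
  have hbn : bilin (hessMat w y) (-(t • h)) (-(t • h)) = t ^ 2 * bilin (hessMat w y) h h := by
    rw [← neg_smul, bilin_smul_vec]; ring
  rw [hbn, map_neg, norm_neg] at hm1
  rw [bilin_smul_vec] at hp1
  rw [ea, norm_add_sq_real] at e1 e2
  rw [map_neg, inner_neg_right, norm_neg] at e2
  have q1 := (abs_le.mp hp1).1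
  have q2 := (abs_le.mp hm1).1
  have hn : ‖t • h‖ ^ 2 = t ^ 2 * ‖h‖ ^ 2 := by
    rw [norm_smul, mul_pow, Real.norm_eq_abs, sq_abs]
  rw [hn] at q1 q2 e1 e2
  have hhn := norm_pos_iff.mpr hh
  have hpos : 0 < ε * (t ^ 2 * ‖h‖ ^ 2) := by positivity
  have : 0 < t ^ 2 * -bilin (hessMat w y) h h := by linarith
  exact pos_of_mul_pos_right this (by positivity)

lemma not_subaffine_of {n : ℕ} {X : Set (Euc n)} (hX : IsOpen X) {w : Euc n → ℝ} {x : Euc n}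
    (hx : x ∈ X) (hw : ContDiffAt ℝ 2 w x) {ε : ℝ} (hε : 0 < ε)
    (hh : hessMat w x = -(ε • (1 : Matrix (Fin n) (Fin n) ℝ))) :
    ¬ SubaffineOn X (fun x => (w x : EReal)) := by
  intro hs
  have ht := taylor_two hw (δ := ε / 4) (by positivity)
  have hXn : ∀ᶠ k in 𝓝 (0 : Euc n), x + k ∈ X := by
    have hc : Continuous fun k : Euc n => x + k := by fun_prop
    have := hc.tendsto 0
    rw [add_zero] at this
    exact this (hX.mem_nhds hx)
  obtain ⟨r, hr, hball⟩ := Metric.eventually_nhds_iff_ball.mp (ht.and hXn)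
  have hmem : ∀ y ∈ closedBall x (r / 2), y - x ∈ ball (0 : Euc n) r := by
    intro y hy
    rw [mem_closedBall, dist_eq_norm] at hy
    rw [mem_ball_zero_iff]
    linarith
  let a : Euc n →ᵃ[ℝ] ℝ := (fderiv ℝ w x : Euc n →ₗ[ℝ] ℝ).toAffineMap +
    AffineMap.const ℝ (Euc n) (w x - fderiv ℝ w x x - ε / 4 * (r / 2) ^ 2)
  have haa : ∀ y, a y = fderiv ℝ w x y + (w x - fderiv ℝ w x x - ε / 4 * (r / 2) ^ 2) :=
    fun y => rfl
  have := hs (closedBall x (r / 2)) (isCompact_closedBall _ _) (fun y hy => by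
    simpa using (hball _ (hmem y hy)).2) a (fun y hy => by
    have hys := frontier_closedBall_subset_sphere hy
    have h1 := (hball _ (hmem y (sphere_subset_closedBall hys))).1
    rw [mem_sphere, dist_eq_norm] at hys
    rw [EReal.coe_le_coe_iff, haa]
    rw [hh, bilin_neg_mat, bilin_smul_one, hys, add_sub_cancel, map_sub] at h1
    have := (abs_le.mp h1).2
    linarith) x (mem_closedBall_self (by positivity))
  rw [EReal.coe_le_coe_iff, haa] at this
  have : 0 < ε / 4 * (r / 2) ^ 2 := by positivity
  linarith

/-- Lemma 4.3: duality characterization of membership in a Dirichlet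
set, for matrices and for C² functions. -/
theorem dirichlet_duality_lemma {n : ℕ} (F : Set (SymMat n)) (hF : IsDirichletSet F) :
    (∀ A : SymMat n, A ∈ F ↔ ∀ B ∈ dirDual F, NotNegDef (A + B)) ∧
    (∀ X : Set (Euc n), IsOpen X → ∀ u : Euc n → ℝ, ContDiffOn ℝ 2 u X →
      ((∀ x ∈ X, ∃ A ∈ F, (A : Matrix (Fin n) (Fin n) ℝ) = hessMat u x) ↔
        ∀ v : Euc n → ℝ, IsTypeFC2 (dirDual F) X v →
          SubaffineOn X (fun x => ((u x + v x : ℝ) : EReal)))) := by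
  refine ⟨fun A => ⟨fun hA B hB => part_one_fwd hF hA hB, part_one_bwd hF⟩, ?_⟩
  intro X hX u hu
  constructor
  · intro h v hv
    refine subaffine_of hX (hu.add hv.1) fun x hx => ?_
    obtain ⟨A, hA, hAe⟩ := h x hx
    obtain ⟨B, hB, hBe⟩ := hv.2 x hx
    rw [hessMat_add (hu.contDiffAt (hX.mem_nhds hx)) (hv.1.contDiffAt (hX.mem_nhds hx)),
      ← hAe, ← hBe]
    exact part_one_fwd hF hA hB
  · intro h x hx
    have hux := hu.contDiffAt (hX.mem_nhds hx)
    refine ⟨⟨hessMat u x, hess_herm hux⟩, ?_, rfl⟩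
    by_contra hA
    obtain ⟨ε, hε, hB⟩ := exists_eps hF hA
    obtain ⟨v, hv, hvB⟩ := exists_quad (-((⟨hessMat u x, hess_herm hux⟩ : SymMat n)
      + ε • symOne n))
    refine not_subaffine_of hX hx (hux.add hv.contDiffAt) hε ?_
      (h v ⟨hv.contDiffOn, fun y _ => ⟨_, hB, (hvB y).symm⟩⟩)
    refine (hessMat_add hux hv.contDiffAt).trans ?_
    rw [hvB]
    simp [symOne]
end
end

section
/- Let F ⊂ Sym²(ℝⁿ) be a Dirichlet set with Dirichlet dual F̃, X ⊂ ℝⁿ open, and u : X → [−∞, ∞) upper semicontinuous. Then u is of type F on X if and only if for every matrix B ∈ F̃ the function x ↦ u(x) + ½⟨Bx, x⟩ is subaffine on X. -/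
open Set Metric Filter MeasureTheory Asymptotics
open scoped Topology BigOperators RealInnerProductSpace

noncomputable section

def bilinCLM {n : ℕ} (A : Matrix (Fin n) (Fin n) ℝ) : Euc n →L[ℝ] Euc n →L[ℝ] ℝ :=
  ∑ i, ∑ j, A i j • ((EuclideanSpace.proj i : Euc n →L[ℝ] ℝ).smulRight
    (EuclideanSpace.proj j : Euc n →L[ℝ] ℝ))

lemma bilinCLM_apply {n : ℕ} (A : Matrix (Fin n) (Fin n) ℝ) (v w : Euc n) :
    bilinCLM A v w = bilin A v w := by
  simp [bilinCLM, bilin, mul_assoc]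

lemma bilin_single {n : ℕ} (A : Matrix (Fin n) (Fin n) ℝ) (i j : Fin n) :
    bilin A (EuclideanSpace.single i 1) (EuclideanSpace.single j 1) = A i j := by
  simp [bilin]

lemma bilin_hess {n : ℕ} (v : Euc n → ℝ) (x y z : Euc n) :
    bilin (hessMat v x) y z = fderiv ℝ (fderiv ℝ v) x y z := by
  have hdec : ∀ y : Euc n, y = ∑ i, y i • (EuclideanSpace.single i (1:ℝ) : Euc n) := by
    intro y
    ext k
    simp [Pi.single_apply]
  conv_rhs => rw [hdec y, hdec z]
  simp only [bilin, hessMat, iteratedFDeriv_two_apply, map_sum, map_smul,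
    ContinuousLinearMap.sum_apply, ContinuousLinearMap.smul_apply, smul_eq_mul, Finset.mul_sum]
  rw [Finset.sum_comm]
  refine Finset.sum_congr rfl fun i _ => Finset.sum_congr rfl fun j _ => ?_
  simp only [Matrix.cons_val_zero, Matrix.cons_val_one]
  ring

lemma hasFDerivAt_quad {n : ℕ} (L : Euc n →L[ℝ] Euc n →L[ℝ] ℝ) (x : Euc n) :
    HasFDerivAt (fun x => 1/2 * L x x) (((1/2:ℝ) • (L + L.flip)) x) x := by
  have h := (L.hasFDerivAt (x := x)).clm_apply (hasFDerivAt_id (𝕜 := ℝ) x)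
  have h2 := h.const_mul (1/2:ℝ)
  refine HasFDerivAt.congr_fderiv h2 ?_
  ext y
  simp only [ContinuousLinearMap.comp_apply,
      ContinuousLinearMap.smul_apply, ContinuousLinearMap.add_apply,
      ContinuousLinearMap.flip_apply, ContinuousLinearMap.id_apply, smul_eq_mul, id]

lemma hess_quad {n : ℕ} (B : SymMat n) (x : Euc n) :
    hessMat (fun x => 1/2 * bilin (B : Matrix (Fin n) (Fin n) ℝ) x x) x = B := by
  have h1 : fderiv ℝ (fun x => 1/2 * bilin (B : Matrix (Fin n) (Fin n) ℝ) x x)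
      = fun x => ((1/2:ℝ) • (bilinCLM (B : Matrix (Fin n) (Fin n) ℝ) + (bilinCLM (B : Matrix (Fin n) (Fin n) ℝ)).flip)) x := by
    funext y
    have := (hasFDerivAt_quad (bilinCLM (B : Matrix (Fin n) (Fin n) ℝ)) y).fderiv
    simpa only [bilinCLM_apply] using this
  have hs : ∀ i j, (B : Matrix (Fin n) (Fin n) ℝ) j i = (B : Matrix (Fin n) (Fin n) ℝ) i j := by
    intro i j
    have h := B.2
    rw [selfAdjoint.mem_iff] at h
    have := congrFun (congrFun h i) j
    simpa [Matrix.star_apply] using this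
  funext i j
  simp only [hessMat, iteratedFDeriv_two_apply, h1]
  rw [ContinuousLinearMap.fderiv]
  simp only [ContinuousLinearMap.smul_apply, ContinuousLinearMap.add_apply,
    ContinuousLinearMap.flip_apply, bilinCLM_apply, Matrix.cons_val_zero, Matrix.cons_val_one,
    bilin_single, hs, smul_eq_mul]
  ring

lemma contDiff_quad {n : ℕ} (B : Matrix (Fin n) (Fin n) ℝ) :
    ContDiff ℝ 2 (fun x : Euc n => 1/2 * bilin B x x) := by
  simp only [← bilinCLM_apply]
  exact contDiff_const.mul ((bilinCLM B).contDiff.clm_apply contDiff_id)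

lemma taylor_two_s6 {n : ℕ} {v : Euc n → ℝ} {x₀ : Euc n} (hv : ContDiffAt ℝ 2 v x₀)
    {ε : ℝ} (hε : 0 < ε) :
    ∃ ρ > 0, ∀ x, ‖x - x₀‖ < ρ →
      |v x - v x₀ - fderiv ℝ v x₀ (x - x₀)
        - 1/2 * fderiv ℝ (fderiv ℝ v) x₀ (x - x₀) (x - x₀)| ≤ ε * ‖x - x₀‖ ^ 2 := by
  set D := fderiv ℝ v x₀ with hD
  set Q := fderiv ℝ (fderiv ℝ v) x₀ with hQ
  have hsym : ∀ y z, Q y z = Q z y := fun y z =>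
    (hv.isSymmSndFDerivAt (by simp)).eq y z
  have hd : HasFDerivAt (fderiv ℝ v) Q x₀ :=
    ((hv.fderiv_right (m := 1) (by norm_num)).differentiableAt (by norm_num)).hasFDerivAt
  have hlo := (hasFDerivAt_iff_isLittleO.1 hd).def hε
  have hdiff : ∀ᶠ y in 𝓝 x₀, DifferentiableAt ℝ v y := by
    filter_upwards [hv.eventually (by simp)] with y hy
    exact hy.differentiableAt (by norm_num)
  obtain ⟨ρ, hρ, hball⟩ := Metric.eventually_nhds_iff.1 (hlo.and hdiff)
  refine ⟨ρ, hρ, fun x hx => ?_⟩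
  have key := (convex_closedBall x₀ ‖x - x₀‖).norm_image_sub_le_of_norm_hasFDerivWithin_le
    (𝕜 := ℝ) (f := fun y => v y - D (y - x₀) - 1/2 * Q (y - x₀) (y - x₀))
    (f' := fun y => fderiv ℝ v y - D - Q (y - x₀)) (C := ε * ‖x - x₀‖) (x := x₀) (y := x)
    ?_ ?_ (by simp) (by simp [dist_eq_norm])
  · simp only [sub_self, map_zero, mul_zero, sub_zero, Real.norm_eq_abs] at key
    calc _ = _ := by congr 1; ring
      _ ≤ _ := key
      _ = _ := by ring
  · intro y hy
    have hy' : dist y x₀ < ρ := lt_of_le_of_lt (Metric.mem_closedBall.1 hy) hx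
    have h0 : HasFDerivAt (fun y : Euc n => y - x₀) (ContinuousLinearMap.id ℝ (Euc n)) y :=
      (hasFDerivAt_id y).sub_const x₀
    have h1 := (hball hy').2.hasFDerivAt
    have h2 := D.hasFDerivAt.comp y h0
    have h3 := (hasFDerivAt_quad Q (y - x₀)).comp y h0
    have h4 := (h1.sub h2).sub h3
    refine HasFDerivAt.hasFDerivWithinAt ?_
    refine HasFDerivAt.congr_fderiv h4 ?_
    ext z
    have hz := hsym z (y - x₀)
    simp only [ContinuousLinearMap.sub_apply, ContinuousLinearMap.comp_apply,
      ContinuousLinearMap.smul_apply, ContinuousLinearMap.add_apply,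
      ContinuousLinearMap.flip_apply, ContinuousLinearMap.id_apply, smul_eq_mul, hz]
    ring
  · intro y hy
    have hy0 := Metric.mem_closedBall.1 hy
    have hy' : dist y x₀ < ρ := lt_of_le_of_lt hy0 hx
    refine (hball hy').1.trans ?_
    rw [← dist_eq_norm]
    gcongr

lemma quad_to_type {n : ℕ} (F : Set (SymMat n)) 
    (X : Set (Euc n)) (hX : IsOpen X) (u : Euc n → EReal)
    (husc : UpperSemicontinuousOn u X) (hfin : ∀ x ∈ X, u x ≠ ⊤)
    (H : ∀ B ∈ dirDual F, SubaffineOn X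
        (fun x => u x + ((1/2 * bilin (B : Matrix (Fin n) (Fin n) ℝ) x x : ℝ) : EReal))) :
    IsTypeF F X u := by
  intro v hv K hK hKX a hfr x₁ hx₁
  by_contra hcon
  simp only [not_le] at hcon
  have hne : u x₁ ≠ ⊥ := by
    intro h
    simp [h] at hcon
  obtain ⟨r, hr⟩ : ∃ r : ℝ, u x₁ = r :=
    ⟨(u x₁).toReal, (EReal.coe_toReal (hfin _ (hKX hx₁)) hne).symm⟩
  rw [hr] at hcon
  have hm : a x₁ < r + v x₁ := by exact_mod_cast hcon
  obtain ⟨R, hR⟩ := hK.isBounded.exists_norm_le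
  have hR0 : 0 ≤ R := (norm_nonneg _).trans (hR _ hx₁)
  obtain ⟨ε, hε, hεR⟩ : ∃ ε > 0, ε * R ^ 2 < r + v x₁ - a x₁ := by
    have hm' : 0 < r + v x₁ - a x₁ := by linarith
    refine ⟨(r + v x₁ - a x₁) / (R^2 + 1), by positivity, ?_⟩
    rw [div_mul_eq_mul_div, div_lt_iff₀ (by positivity)]
    nlinarith
  have hvc : ContinuousOn v K := hv.1.continuousOn.mono hKX
  have hac : Continuous a := a.continuous_of_finiteDimensional
  have hcc : ContinuousOn (fun x => ((v x - a x + ε * ‖x‖ ^ 2 : ℝ) : EReal)) K :=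
    continuous_coe_real_ereal.comp_continuousOn
      ((hvc.sub hac.continuousOn).add (by fun_prop))
  obtain ⟨x₀, hx₀, hmax⟩ := UpperSemicontinuousOn.exists_isMaxOn ⟨x₁, hx₁⟩ hK
    ((husc.mono hKX).add' hcc.upperSemicontinuousOn (fun x _ =>
      EReal.continuousAt_add (Or.inr (EReal.coe_ne_bot _)) (Or.inr (EReal.coe_ne_top _))))
  rw [isMaxOn_iff] at hmax
  have h1 := hmax x₁ hx₁
  have hne0 : u x₀ ≠ ⊥ := by
    intro h
    rw [h, hr, EReal.bot_add, ← EReal.coe_add, le_bot_iff] at h1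
    exact EReal.coe_ne_bot _ h1
  obtain ⟨r₀, hr₀⟩ : ∃ r : ℝ, u x₀ = r :=
    ⟨(u x₀).toReal, (EReal.coe_toReal (hfin _ (hKX hx₀)) hne0).symm⟩
  rw [hr, hr₀, ← EReal.coe_add, ← EReal.coe_add, EReal.coe_le_coe_iff] at h1
  have hint : x₀ ∈ interior K := by
    by_contra hni
    have hx₀f : x₀ ∈ frontier K := ⟨subset_closure hx₀, hni⟩
    have h2 := hfr x₀ hx₀f
    simp only [hr₀, ← EReal.coe_add, EReal.coe_le_coe_iff] at h2
    have h3 : ε * ‖x₀‖ ^ 2 ≤ ε * R ^ 2 := by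
      have := hR _ hx₀
      gcongr
    have h4 : 0 ≤ ε * ‖x₁‖ ^ 2 := by positivity
    linarith
  have hvat : ContDiffAt ℝ 2 v x₀ := hv.1.contDiffAt (hX.mem_nhds (hKX hx₀))
  obtain ⟨ρ, hρ, hT⟩ := taylor_two_s6 hvat (half_pos hε)
  obtain ⟨s, hs, hsK⟩ := Metric.isOpen_iff.1 isOpen_interior x₀ hint
  obtain ⟨t, ht, htρ, hts⟩ : ∃ t > 0, t < ρ ∧ t < s :=
    ⟨min ρ s / 2, by positivity, by linarith [min_le_left ρ s, lt_min hρ hs],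
      by linarith [min_le_right ρ s, lt_min hρ hs]⟩
  have hsub : closedBall x₀ t ⊆ K :=
    (closedBall_subset_ball hts).trans (hsK.trans interior_subset)
  obtain ⟨A, hA, hAv⟩ := hv.2 x₀ (hKX hx₀)
  set D := fderiv ℝ v x₀ with hD
  set Q := fderiv ℝ (fderiv ℝ v) x₀ with hQ
  have hAQ : ∀ y, bilin (A : Matrix (Fin n) (Fin n) ℝ) y y = Q y y := by
    intro y
    rw [hAv, bilin_hess]
  let ℓ : Euc n →L[ℝ] ℝ := -D + (1/2 : ℝ) • (Q x₀ + Q.flip x₀) - (2 * ε) • innerSL ℝ x₀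
  let c : ℝ := r₀ + D x₀ - 1/2 * Q x₀ x₀ - a x₀ + 2 * ε * ‖x₀‖ ^ 2 - ε / 2 * t ^ 2
  let b : Euc n →ᵃ[ℝ] ℝ := a + (ℓ : Euc n →ₗ[ℝ] ℝ).toAffineMap + AffineMap.const ℝ (Euc n) c
  have hb : ∀ x, b x = a x + (- D x + 1/2 * (Q x₀ x + Q x x₀) - 2 * ε * ⟪x₀, x⟫) + c := by
    intro x
    simp [b, ℓ]
    ring
  have hfin2 := H A hA (closedBall x₀ t) (isCompact_closedBall _ _) (hsub.trans hKX) b ?_ x₀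
    (mem_closedBall_self ht.le)
  · simp only [hr₀, ← EReal.coe_add, EReal.coe_le_coe_iff, hAQ, hb, real_inner_self_eq_norm_sq, c] at hfin2
    have : 0 < ε / 2 * t ^ 2 := by positivity
    linarith
  · intro x hx
    have hxs : ‖x - x₀‖ = t := by
      simpa [dist_eq_norm] using frontier_closedBall_subset_sphere hx
    have hxK : x ∈ K := hsub (by simp [dist_eq_norm, hxs])
    by_cases hxb : u x = ⊥
    · simp [hxb]
    obtain ⟨q, hq⟩ : ∃ r : ℝ, u x = r :=
      ⟨(u x).toReal, (EReal.coe_toReal (hfin _ (hKX hxK)) hxb).symm⟩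
    have h5 := hmax x hxK
    simp only [hq, hr₀, ← EReal.coe_add, EReal.coe_le_coe_iff] at h5
    simp only [hq, ← EReal.coe_add, EReal.coe_le_coe_iff, hAQ, hb, c]
    have h6 := (abs_le.1 (hT x (by rw [hxs]; exact htρ))).1
    have h7 : ‖x‖ ^ 2 = ‖x₀‖ ^ 2 + 2 * (⟪x₀, x⟫ - ‖x₀‖ ^ 2) + t ^ 2 := by
      have := norm_sub_sq_real x x₀
      rw [hxs, real_inner_comm] at this
      linarith
    rw [hxs] at h6
    simp only [map_sub, ContinuousLinearMap.sub_apply] at h6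
    rw [h7] at h5
    linarith

/-- Lemma 4.6: `u` is of type `F` iff `u + ½⟨Bx,x⟩` is subaffine for
every quadratic `B` in the Dirichlet dual of `F`. -/
theorem typeF_iff_quadratic_tests {n : ℕ} (F : Set (SymMat n)) (hF : IsDirichletSet F)
    (X : Set (Euc n)) (hX : IsOpen X) (u : Euc n → EReal)
    (husc : UpperSemicontinuousOn u X) (hfin : ∀ x ∈ X, u x ≠ ⊤) :
    IsTypeF F X u ↔ ∀ B ∈ dirDual F,
      SubaffineOn X
        (fun x => u x + ((1/2 * bilin (B : Matrix (Fin n) (Fin n) ℝ) x x : ℝ) : EReal)) := by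
  constructor
  · intro h B hB
    exact h _ ⟨(contDiff_quad _).contDiffOn, fun x _ => ⟨B, hB, (hess_quad B x).symm⟩⟩
  · exact quad_to_type F X hX u husc hfin
end
end

section
/- Let F ⊂ Sym²(ℝⁿ) be a Dirichlet set. The following are equivalent: (i) 0 ∉ Int F; (ii) for every open set X ⊂ ℝⁿ, every function u of type F on X, and every compact set K ⊂ X, sup_K u ≤ sup_{∂K} u. -/
open Set Metric Filter MeasureTheory Asymptotics
open scoped Topology BigOperators RealInnerProductSpace

noncomputable section

theorem second_order_aux {f f' : ℝ → ℝ} {c : ℝ} (h1 : ∀ t, HasDerivAt f (f' t) t)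
    (h2 : HasDerivAt f' c 0) (hm : IsLocalMax f 0) : c ≤ 0 := by
  by_contra hc
  push Not at hc
  have e1 : deriv f = f' := funext fun t => (h1 t).deriv
  have hmin : IsLocalMin f 0 := by
    apply isLocalMin_of_deriv_deriv_pos
    · rw [e1, h2.deriv]; exact hc
    · exact hm.deriv_eq_zero
    · exact (h1 0).continuousAt
  have hconst : f =ᶠ[𝓝 0] fun _ => f 0 := by
    filter_upwards [hm, hmin] with t ha hb
    exact le_antisymm ha hb
  have hd : deriv f =ᶠ[𝓝 0] fun _ => (0 : ℝ) := by
    have := hconst.deriv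
    simpa using this
  have h0 : deriv (deriv f) 0 = 0 := by
    rw [hd.deriv_eq]; simp
  rw [e1, h2.deriv] at h0
  linarith

theorem hess_le_aux {n : ℕ} {v : Euc n → ℝ} (hv : ContDiff ℝ 2 v) (a : Euc n →ᵃ[ℝ] ℝ)
    (c : ℝ) (y : Euc n) (hm : IsLocalMax (fun x => v x - c / 2 * ‖x‖ ^ 2 - a x) y) (h : Euc n) :
    fderiv ℝ (fderiv ℝ v) y h h ≤ c * ‖h‖ ^ 2 := by
  have hline : ∀ t : ℝ, HasDerivAt (fun t : ℝ => y + t • h) h t := fun t => by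
    simpa using ((hasDerivAt_id t).smul_const h).const_add y
  have hdv : Differentiable ℝ v := hv.differentiable (by norm_num)
  have hdv2 : Differentiable ℝ (fderiv ℝ v) :=
    (hv.fderiv_right (m := 1) (by norm_num)).differentiable (by norm_num)
  have hmain : fderiv ℝ (fderiv ℝ v) y h h - c * ‖h‖ ^ 2 ≤ 0 := by
    apply second_order_aux (f := fun t : ℝ => v (y + t • h) - c / 2 * ‖y + t • h‖ ^ 2 - a (y + t • h))
      (f' := fun t => fderiv ℝ v (y + t • h) h - c * (⟪y, h⟫ + t * ‖h‖ ^ 2) - a.linear h)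
    · intro t
      have d1 : HasDerivAt (fun t : ℝ => v (y + t • h)) (fderiv ℝ v (y + t • h) h) t :=
        (hdv (y + t • h)).hasFDerivAt.comp_hasDerivAt t (hline t)
      have d2 : HasDerivAt (fun t : ℝ => c / 2 * ‖y + t • h‖ ^ 2)
          (c * (⟪y, h⟫ + t * ‖h‖ ^ 2)) t := by
        have := ((hline t).norm_sq).const_mul (c / 2)
        rw [inner_add_left, real_inner_smul_left, real_inner_self_eq_norm_sq] at this
        refine this.congr_deriv ?_
        ring
      have d3 : HasDerivAt (fun t : ℝ => a (y + t • h)) (a.linear h) t := by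
        have e : (fun t : ℝ => a (y + t • h)) = fun t : ℝ => t * a.linear h + a y := by
          funext s
          have := a.map_vadd y (s • h)
          rw [vadd_eq_add, vadd_eq_add, map_smul, smul_eq_mul, add_comm] at this
          exact this
        rw [e]
        simpa using ((hasDerivAt_id t).mul_const (a.linear h)).add_const (a y)
      exact (d1.sub d2).sub d3
    · have d1 : HasDerivAt (fun t : ℝ => fderiv ℝ v (y + t • h) h)
          (fderiv ℝ (fderiv ℝ v) y h h) 0 := by
        have hy : HasFDerivAt (fderiv ℝ v) (fderiv ℝ (fderiv ℝ v) y) (y + (0 : ℝ) • h) := by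
          simpa using (hdv2 y).hasFDerivAt
        have := hy.comp_hasDerivAt (0 : ℝ) (hline 0)
        simpa using this.clm_apply (hasDerivAt_const (0 : ℝ) h)
      have d2 : HasDerivAt (fun t : ℝ => c * (⟪y, h⟫ + t * ‖h‖ ^ 2)) (c * ‖h‖ ^ 2) 0 := by
        simpa using (((hasDerivAt_id (0 : ℝ)).mul_const (‖h‖ ^ 2)).const_add ⟪y, h⟫).const_mul c
      exact (d1.sub d2).sub_const _
    · have hc : ContinuousAt (fun t : ℝ => y + t • h) 0 := (hline 0).continuousAt
      have ht : Tendsto (fun t : ℝ => y + t • h) (𝓝 0) (𝓝 y) := by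
        simpa [ContinuousAt] using hc
      have := ht.eventually hm
      filter_upwards [this] with t h3
      simpa using h3
  linarith

theorem interior_add_psd {n : ℕ} {F : Set (SymMat n)} (hF : IsDirichletSet F) {A P : SymMat n}
    (hA : A ∈ interior F) (hP : (P : Matrix (Fin n) (Fin n) ℝ).PosSemidef) :
    A + P ∈ interior F := by
  have ho : IsOpen ((fun B : SymMat n => B - P) ⁻¹' interior F) :=
    isOpen_interior.preimage (by fun_prop)
  have hs : (fun B : SymMat n => B - P) ⁻¹' interior F ⊆ F := by
    intro B hB
    have := hF.add_psd _ (interior_subset hB) P hP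
    simpa using this
  apply interior_maximal hs ho
  simpa using hA

theorem quad_hess {n : ℕ} (v : Euc n → ℝ) (y : Euc n) (x : Fin n → ℝ) :
    x ⬝ᵥ (hessMat v y).mulVec x =
      fderiv ℝ (fderiv ℝ v) y (WithLp.toLp 2 x) (WithLp.toLp 2 x) := by
  have hx : (WithLp.toLp 2 x : Euc n) = ∑ i, x i • EuclideanSpace.single i (1 : ℝ) := by
    ext j
    simp [Finset.sum_apply, Pi.single_apply]
  rw [hx]
  simp only [map_sum, map_smul, ContinuousLinearMap.sum_apply, ContinuousLinearMap.smul_apply,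
    smul_eq_mul, dotProduct, Matrix.mulVec, hessMat, iteratedFDeriv_two_apply]
  rw [Finset.sum_congr rfl fun i _ => Finset.mul_sum _ _ _, Finset.sum_comm]
  refine Finset.sum_congr rfl fun i _ => ?_
  rw [Finset.mul_sum]
  refine Finset.sum_congr rfl fun j _ => ?_
  simp
  ring

theorem quad_isTypeF {n : ℕ} {F : Set (SymMat n)} (hF : IsDirichletSet F) (ε : ℝ)
    (hε : -(ε • symOne n) ∈ interior F) :
    IsTypeF F univ (fun x : Euc n => ((-(ε / 2 * ‖x‖ ^ 2) : ℝ) : EReal)) := by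
  intro v hv K hK _ a hfr x0 hx0
  obtain ⟨hvc, hvh⟩ := hv
  rw [contDiffOn_univ] at hvc
  have hac : Continuous a := a.continuous_of_finiteDimensional
  simp only [← EReal.coe_add, EReal.coe_le_coe_iff] at hfr ⊢
  by_contra hlt
  push Not at hlt
  obtain ⟨R, hR⟩ := hK.isBounded.exists_norm_le
  set η := -(ε / 2 * ‖x0‖ ^ 2) + v x0 - a x0 with hη
  have hηp : 0 < η := by rw [hη]; linarith
  set δ := η / (R ^ 2 + 1) with hδ
  have hδp : 0 < δ := by positivity
  have hδR : δ * (R ^ 2 + 1) = η := by rw [hδ]; field_simp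
  set g : Euc n → ℝ := fun x => v x - (ε - δ) / 2 * ‖x‖ ^ 2 - a x with hg
  have hgc : Continuous g := by
    have := hvc.continuous
    fun_prop
  obtain ⟨y, hyK, hy⟩ := hK.exists_isMaxOn ⟨x0, hx0⟩ hgc.continuousOn
  have hyi : y ∈ interior K := by
    by_contra hni
    have hyf : y ∈ frontier K := by
      rw [hK.isClosed.frontier_eq]; exact ⟨hyK, hni⟩
    have h1 := hfr y hyf
    have h2 : g x0 ≤ g y := hy hx0
    have h3 : ‖y‖ ^ 2 ≤ R ^ 2 := by
      have := hR y hyK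
      have := norm_nonneg y
      gcongr
    simp only [hg] at h2
    have h4 : δ * ‖y‖ ^ 2 ≤ δ * R ^ 2 := by gcongr
    have h5 : 0 ≤ δ * ‖x0‖ ^ 2 := by positivity
    have h6 : 0 ≤ δ * R ^ 2 := by positivity
    nlinarith
  have hmax : IsLocalMax g y := hy.isLocalMax (mem_interior_iff_mem_nhds.mp hyi)
  have hle := hess_le_aux hvc a (ε - δ) y hmax
  obtain ⟨A, hA, hAe⟩ := hvh y (mem_univ y)
  apply hA
  have hP : ((ε • symOne n - A : SymMat n) : Matrix (Fin n) (Fin n) ℝ).PosSemidef := by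
    apply Matrix.PosSemidef.of_dotProduct_mulVec_nonneg
    · exact (ε • symOne n - A : SymMat n).2
    · intro x
      have h1 := hle (WithLp.toLp 2 x)
      rw [← quad_hess, ← hAe] at h1
      have h2 : ‖(WithLp.toLp 2 x : Euc n)‖ ^ 2 = x ⬝ᵥ x := by
        rw [EuclideanSpace.real_norm_sq_eq]
        simp [dotProduct, sq]
      have h3 : 0 ≤ δ * ‖(WithLp.toLp 2 x : Euc n)‖ ^ 2 := by positivity
      have h4 : ((ε • symOne n - A : SymMat n) : Matrix (Fin n) (Fin n) ℝ)
          = ε • (1 : Matrix (Fin n) (Fin n) ℝ) - A := rfl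
      rw [h4, Matrix.sub_mulVec, Matrix.smul_mulVec, Matrix.one_mulVec, dotProduct_sub,
        dotProduct_smul, star_trivial, smul_eq_mul]
      rw [h2] at h1 h3
      linarith
  have := interior_add_psd hF hε hP
  convert this using 1
  abel

/-- Proposition 4.8: the maximum principle holds for all functions of
type `F` iff `0 ∉ Int F`. -/
theorem maximum_principle_iff_zero_not_mem_interior {n : ℕ} (F : Set (SymMat n))
    (hF : IsDirichletSet F) :
    (0 : SymMat n) ∉ interior F ↔
      ∀ X : Set (Euc n), IsOpen X → ∀ u : Euc n → EReal,
        UpperSemicontinuousOn u X → (∀ x ∈ X, u x ≠ ⊤) → IsTypeF F X u →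
        ∀ K : Set (Euc n), IsCompact K → K ⊆ X →
          ⨆ x ∈ K, u x ≤ ⨆ x ∈ frontier K, u x := by
  constructor
  · intro h0 X _ u _ _ hu K hK hKX
    have h := hu (fun _ => 0) ⟨contDiffOn_const, fun x _ => ⟨0, by simpa [dirDual] using h0, by
      ext i j
      simp [hessMat, iteratedFDeriv_two_apply]⟩⟩ K hK hKX
    refine iSup₂_le fun x hx => ?_
    rw [← EReal.le_of_forall_lt_iff_le]
    intro z hz
    have := h (AffineMap.const ℝ (Euc n) z) (fun y hy => by
      simpa using (le_iSup₂ (f := fun y (_ : y ∈ frontier K) => u y) y hy).trans hz.le) x hx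
    simpa using this
  · intro H h0
    have hcont : Tendsto (fun ε : ℝ => -(ε • symOne n)) (𝓝[>] 0) (𝓝 0) := by
      have : Continuous (fun ε : ℝ => -(ε • symOne n)) := by
        refine continuous_induced_rng.2 ?_
        change Continuous (fun ε : ℝ => -(ε • (1 : Matrix (Fin n) (Fin n) ℝ)))
        exact (continuous_id.smul continuous_const).neg
      have := this.tendsto 0
      simp only [zero_smul, neg_zero] at this
      exact this.mono_left nhdsWithin_le_nhds
    obtain ⟨ε, hε, hεp⟩ := ((hcont.eventually (isOpen_interior.mem_nhds h0)).and
      self_mem_nhdsWithin).exists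
    have hεp' : (0 : ℝ) < ε := hεp
    have hc : Continuous (fun x : Euc n => ((-(ε / 2 * ‖x‖ ^ 2) : ℝ) : EReal)) :=
      continuous_coe_real_ereal.comp (by fun_prop)
    have h := H univ isOpen_univ _ (hc.upperSemicontinuous.upperSemicontinuousOn _)
      (fun x _ => EReal.coe_ne_top _) (quad_isTypeF hF ε hε) (closedBall 0 1)
      (isCompact_closedBall 0 1) (subset_univ _)
    have h1 := (le_iSup₂ (f := fun (x : Euc n) (_ : x ∈ closedBall (0 : Euc n) 1) =>
      ((-(ε / 2 * ‖x‖ ^ 2) : ℝ) : EReal)) 0 (by simp)).trans h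
    have h2 : (⨆ x ∈ frontier (closedBall (0 : Euc n) 1),
        ((-(ε / 2 * ‖x‖ ^ 2) : ℝ) : EReal)) ≤ ((-(ε / 2) : ℝ) : EReal) := by
      refine iSup₂_le fun x hx => ?_
      have hx' : ‖x‖ = 1 := by simpa using frontier_closedBall_subset_sphere hx
      rw [hx']
      simp
    have h3 := h1.trans h2
    rw [EReal.coe_le_coe_iff] at h3
    simp at h3
    linarith
end
end

section
/- Let F ⊂ Sym²(ℝⁿ) be a Dirichlet set with ray set F⃗. Then a matrix A belongs to Int F⃗ if and only if there exist ε > 0 and R > 0 such that C(A − εI) ∈ F for every C ≥ R. -/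
open Set Metric Filter MeasureTheory Asymptotics
open scoped Topology BigOperators RealInnerProductSpace

noncomputable section

lemma psd_nhds {n : ℕ} (ε : ℝ) (hε : 0 < ε) :
    ∀ᶠ B : SymMat n in 𝓝 0,
      ((B + ε • symOne n : SymMat n) : Matrix (Fin n) (Fin n) ℝ).PosSemidef := by
  have hδ : 0 < ε / (n + 1) := by positivity
  have h1 : ∀ᶠ B : SymMat n in 𝓝 0, ∀ i j, |(B : Matrix (Fin n) (Fin n) ℝ) i j| < ε / (n + 1) := by
    rw [eventually_all]; intro i
    rw [eventually_all]; intro j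
    have hc : Continuous fun B : SymMat n => |(B : Matrix (Fin n) (Fin n) ℝ) i j| :=
      (continuous_subtype_val.matrix_elem i j).abs
    have := hc.tendsto 0
    simp only [ZeroMemClass.coe_zero, Matrix.zero_apply, abs_zero] at this
    exact this.eventually (gt_mem_nhds hδ)
  filter_upwards [h1] with B hB
  refine Matrix.PosSemidef.of_dotProduct_mulVec_nonneg (B + ε • symOne n).2 fun x => ?_
  have e : star x ⬝ᵥ Matrix.mulVec ((B + ε • symOne n : SymMat n) : Matrix (Fin n) (Fin n) ℝ) x
      = (∑ i, ∑ j, x i * ((B : Matrix (Fin n) (Fin n) ℝ) i j * x j)) + ε * ∑ i, x i ^ 2 := by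
    have : ((B + ε • symOne n : SymMat n) : Matrix (Fin n) (Fin n) ℝ)
      = (B : Matrix (Fin n) (Fin n) ℝ) + ε • (1 : Matrix (Fin n) (Fin n) ℝ) := rfl
    rw [this, Matrix.add_mulVec, Matrix.smul_mulVec, Matrix.one_mulVec, dotProduct_add,
      dotProduct_smul]
    simp [dotProduct, Matrix.mulVec, Finset.mul_sum, pow_two]
  rw [e]
  have h2 : ∀ i j, -(ε / (n + 1)) * ((x i ^ 2 + x j ^ 2) / 2)
      ≤ x i * ((B : Matrix (Fin n) (Fin n) ℝ) i j * x j) := by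
    intro i j
    have hb := hB i j
    have h3 : |x i * ((B : Matrix (Fin n) (Fin n) ℝ) i j * x j)|
        ≤ (ε / (n + 1)) * ((x i ^ 2 + x j ^ 2) / 2) := by
      rw [abs_mul, abs_mul, show |x i| * (|(B : Matrix (Fin n) (Fin n) ℝ) i j| * |x j|)
        = |(B : Matrix (Fin n) (Fin n) ℝ) i j| * (|x i| * |x j|) by ring]
      refine mul_le_mul hb.le ?_ (by positivity) hδ.le
      nlinarith [sq_nonneg (|x i| - |x j|), sq_abs (x i), sq_abs (x j)]
    linarith [neg_abs_le (x i * ((B : Matrix (Fin n) (Fin n) ℝ) i j * x j))]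
  have h4 := Finset.sum_le_sum fun i (_ : i ∈ Finset.univ) =>
    Finset.sum_le_sum fun j (_ : j ∈ Finset.univ) => h2 i j
  have h5 : ∑ i, ∑ j, -(ε / (n + 1)) * ((x i ^ 2 + x j ^ 2) / 2)
      = -(ε / (n + 1)) * (n * ∑ i, x i ^ 2) := by
    simp only [← Finset.mul_sum, ← Finset.sum_div, Finset.sum_add_distrib]
    simp [← Finset.mul_sum]
  rw [h5] at h4
  have h6 : 0 ≤ ∑ i, x i ^ 2 := Finset.sum_nonneg fun i _ => sq_nonneg _
  have h7 : ε / (n + 1) * n ≤ ε := by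
    rw [div_mul_eq_mul_div, div_le_iff₀ (by positivity)]; nlinarith
  nlinarith [mul_le_mul_of_nonneg_right h7 h6]

lemma ray_add {n : ℕ} {F : Set (SymMat n)} (hF : IsDirichletSet F) {A B : SymMat n}
    (hA : ∃ t₀ : ℝ, ∀ t : ℝ, t₀ ≤ t → t • A ∈ F)
    (h : ((B - A : SymMat n) : Matrix (Fin n) (Fin n) ℝ).PosSemidef) :
    ∃ t₀ : ℝ, ∀ t : ℝ, t₀ ≤ t → t • B ∈ F := by
  obtain ⟨t₀, ht⟩ := hA
  refine ⟨max t₀ 0, fun t hm => ?_⟩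
  have := hF.add_psd _ (ht t ((le_max_left _ _).trans hm)) (t • (B - A))
    (by exact h.smul ((le_max_right _ _).trans hm))
  rwa [← smul_add, add_sub_cancel] at this

/-- Corollary 5.10: `A ∈ Int F⃗` iff `C(A − εI) ∈ F` for all
sufficiently large `C`, for some `ε > 0`. -/
theorem mem_interior_raySet_iff {n : ℕ} (F : Set (SymMat n)) (hF : IsDirichletSet F)
    (A : SymMat n) :
    A ∈ interior (raySet F) ↔
      ∃ ε : ℝ, 0 < ε ∧ ∃ R : ℝ, 0 < R ∧
        ∀ C : ℝ, R ≤ C → C • (A - ε • symOne n) ∈ F := by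
  constructor
  · intro h
    have hc : Continuous fun s : ℝ => A - (2 * s) • symOne n := by
      refine continuous_const.sub (Continuous.subtype_mk ?_ _)
      exact (continuous_const.mul continuous_id).smul continuous_const
    have h0 : ∀ᶠ s : ℝ in 𝓝 0, A - (2 * s) • symOne n ∈ interior (raySet F) := by
      apply hc.continuousAt.eventually
      simpa using isOpen_interior.mem_nhds h
    obtain ⟨ε, hm, hε⟩ := ((h0.filter_mono nhdsWithin_le_nhds).and
      (self_mem_nhdsWithin (s := Ioi (0:ℝ)))).exists
    have hε : 0 < ε := hε
    have hcl := interior_subset hm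
    have hc2 : Continuous fun B : SymMat n => A - (2 * ε) • symOne n - B := by fun_prop
    have hp : ∀ᶠ B : SymMat n in 𝓝 (A - (2 * ε) • symOne n),
        ((A - (2 * ε) • symOne n - B + ε • symOne n : SymMat n) :
          Matrix (Fin n) (Fin n) ℝ).PosSemidef := by
      have ht := hc2.tendsto (A - (2 * ε) • symOne n)
      simp only [sub_self] at ht
      exact ht.eventually (psd_nhds ε hε)
    obtain ⟨B, hB, hP⟩ := ((mem_closure_iff_frequently.mp hcl).and_eventually hp).exists
    have heq : A - (2 * ε) • symOne n - B + ε • symOne n = (A - ε • symOne n) - B := by module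
    rw [heq] at hP
    obtain ⟨t₀, ht⟩ := ray_add hF hB hP
    exact ⟨ε, hε, max t₀ 1, by positivity, fun C hC => ht C ((le_max_left _ _).trans hC)⟩
  · rintro ⟨ε, hε, R, -, hR⟩
    rw [mem_interior_iff_mem_nhds]
    have hc2 : Continuous fun B : SymMat n => B - A := by fun_prop
    have hp : ∀ᶠ B : SymMat n in 𝓝 A,
        ((B - A + ε • symOne n : SymMat n) : Matrix (Fin n) (Fin n) ℝ).PosSemidef := by
      have ht := hc2.tendsto (A)
      simp only [sub_self] at ht
      exact ht.eventually (psd_nhds ε hε)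
    filter_upwards [hp] with B hB
    apply subset_closure
    have heq : B - A + ε • symOne n = B - (A - ε • symOne n) := by abel
    rw [heq] at hB
    exact ray_add hF ⟨R, hR⟩ hB
end
end
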